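/- Let 𝛑 be a policy ensemble, Lipschitz continuous in α up to finitely many discontinuities, with 𝛍 = Ψ(𝛑). Under Assumptions (W) and (Lip), consider the N-agent policy (π¹,…,π^{i−1},π̂,π^{i+1},…,π^N) where (π¹,…,π^N) = Γ_N(𝛑) and π̂ ∈ Π is arbitrary. Then for any ε, p > 0 there exists N' such that for all N > N': |J^N_i(π¹,…,π^{i−1},π̂,π^{i+1},…,π^N) − J^𝛍_{i/N}(π̂)| < ε, uniformly over all π̂ ∈ Π and all i in some set 𝒲_N ⊆ 𝒱_N with |𝒲_N| ≥ ⌊(1−p)N⌋. -/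

import Mathlib

open MeasureTheory Filter
open scoped BigOperators

namespace GMFG

variable {𝒳 𝒰 : Type*}

/-- The probability simplex 𝒫(𝒳) on a finite set, as probability mass functions. -/
def simplex (𝒳 : Type*) [Fintype 𝒳] : Set (𝒳 → ℝ) :=
  {p | (∀ x, 0 ≤ p x) ∧ ∑ x, p x = 1}

/-- The set ℬ₁(𝒳) of (sub-probability) measures with total mass at most 1,
as mass functions. -/
def subProb (𝒳 : Type*) [Fintype 𝒳] : Set (𝒳 → ℝ) :=
  {p | (∀ x, 0 ≤ p x) ∧ ∑ x, p x ≤ 1}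

/-- L¹ distance between measures on a finite set. -/
noncomputable def l1dist [Fintype 𝒳] (ν ν' : 𝒳 → ℝ) : ℝ := ∑ x, |ν x - ν' x|

/-- Markovian feedback policies π ∈ Π = 𝒫(𝒰)^{𝒯×𝒳}. -/
def IsPolicy [Fintype 𝒰] (π : ℕ → 𝒳 → 𝒰 → ℝ) : Prop :=
  ∀ t x, (∀ u, 0 ≤ π t x u) ∧ ∑ u, π t x u = 1

/-- P : 𝒳×𝒰×ℬ₁(𝒳) → 𝒫(𝒳) is a transition kernel. -/
def IsKernel [Fintype 𝒳] [Fintype 𝒰] (P : 𝒳 → 𝒰 → (𝒳 → ℝ) → 𝒳 → ℝ) : Prop :=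
  ∀ x u ν, ν ∈ subProb 𝒳 → P x u ν ∈ simplex 𝒳

/-- Lipschitz continuity of the transition kernel w.r.t. the L¹ norm. -/
def KernelLipschitz [Fintype 𝒳] [Fintype 𝒰] (P : 𝒳 → 𝒰 → (𝒳 → ℝ) → 𝒳 → ℝ) (L : ℝ) : Prop :=
  ∀ x u ν ν', ν ∈ subProb 𝒳 → ν' ∈ subProb 𝒳 → l1dist (P x u ν) (P x u ν') ≤ L * l1dist ν ν'

/-- Lipschitz continuity of the reward w.r.t. the L¹ norm. -/
def RewardLipschitz [Fintype 𝒳] [Fintype 𝒰] (r : 𝒳 → 𝒰 → (𝒳 → ℝ) → ℝ) (L : ℝ) : Prop :=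
  ∀ x u ν ν', ν ∈ subProb 𝒳 → ν' ∈ subProb 𝒳 → |r x u ν - r x u ν'| ≤ L * l1dist ν ν'

/-- A graphon: symmetric, measurable, [0,1]-valued. -/
def IsGraphon (W : ℝ → ℝ → ℝ) : Prop :=
  Measurable (Function.uncurry W) ∧ (∀ a b, W a b = W b a) ∧ ∀ a b, W a b ∈ Set.Icc (0:ℝ) 1

/-- Lipschitz continuity of a graphon on [0,1]². -/
def GraphonLipschitz (W : ℝ → ℝ → ℝ) (L : ℝ) : Prop :=
  ∀ a b a' b' : ℝ, a ∈ Set.Icc (0:ℝ) 1 → b ∈ Set.Icc (0:ℝ) 1 → a' ∈ Set.Icc (0:ℝ) 1 →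
    b' ∈ Set.Icc (0:ℝ) 1 → |W a b - W a' b'| ≤ L * (|a - a'| + |b - b'|)

/-- The neighborhood mean field 𝔾^α = ∫₀¹ W(α,β) ν^β dβ of a state marginal ensemble ν. -/
noncomputable def nbhd [Fintype 𝒳] (W : ℝ → ℝ → ℝ) (ν : ℝ → 𝒳 → ℝ) (α : ℝ) : 𝒳 → ℝ :=
  fun x => ∫ β in Set.Ioc (0:ℝ) 1, W α β * ν β x

/-- 𝛍 = Ψ(𝛑): the (measurable) mean field ensemble generated by the policy ensemble 𝛑,
via μ^α_0 = μ₀ and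
μ^α_{t+1}(x') = Σ_{x,u} μ^α_t(x) π^α_t(u|x) P(x'|x,u,𝔾^α_t). -/
def IsMeanFieldOf [Fintype 𝒳] [Fintype 𝒰] (W : ℝ → ℝ → ℝ) (P : 𝒳 → 𝒰 → (𝒳 → ℝ) → 𝒳 → ℝ)
    (μ0 : 𝒳 → ℝ) (πe : ℝ → ℕ → 𝒳 → 𝒰 → ℝ) (μ : ℕ → ℝ → 𝒳 → ℝ) : Prop :=
  (∀ t x, Measurable fun α => μ t α x) ∧
  (∀ α ∈ Set.Icc (0:ℝ) 1, μ 0 α = μ0) ∧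
  ∀ t : ℕ, ∀ α ∈ Set.Icc (0:ℝ) 1, ∀ x' : 𝒳,
    μ (t+1) α x' = ∑ x, μ t α x * ∑ u, πe α t x u * P x u (nbhd W (μ t) α) x'

/-- The law of the state of a single mean field agent with neighborhood mean field
G and policy π: X_0 ∼ μ₀, U_t ∼ π_t(·|X_t), X_{t+1} ∼ P(·|X_t,U_t,G_t). -/
noncomputable def stateLaw [Fintype 𝒳] [Fintype 𝒰] (P : 𝒳 → 𝒰 → (𝒳 → ℝ) → 𝒳 → ℝ)
    (μ0 : 𝒳 → ℝ) (G : ℕ → 𝒳 → ℝ) (π : ℕ → 𝒳 → 𝒰 → ℝ) : ℕ → 𝒳 → ℝ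
  | 0 => μ0
  | (t+1) => fun x' => ∑ x, stateLaw P μ0 G π t x * ∑ u, π t x u * P x u (G t) x'

/-- Mean field objective J(π) = E[Σ_{t<T} r(X_t,U_t,G_t)] of a single agent whose
neighborhood mean field is G. -/
noncomputable def Jmf [Fintype 𝒳] [Fintype 𝒰] (T : ℕ) (r : 𝒳 → 𝒰 → (𝒳 → ℝ) → ℝ)
    (P : 𝒳 → 𝒰 → (𝒳 → ℝ) → 𝒳 → ℝ) (μ0 : 𝒳 → ℝ) (G : ℕ → 𝒳 → ℝ) (π : ℕ → 𝒳 → 𝒰 → ℝ) : ℝ :=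
  ∑ t ∈ Finset.range T, ∑ x, stateLaw P μ0 G π t x * ∑ u, π t x u * r x u (G t)

/-- A Graphon Mean Field Equilibrium: a measurable policy ensemble 𝛑 and mean field
ensemble 𝛍 with 𝛍 = Ψ(𝛑) and π^α optimal for J^𝛍_α for every α ∈ [0,1]. -/
def IsGMFE [Fintype 𝒳] [Fintype 𝒰] (T : ℕ) (W : ℝ → ℝ → ℝ) (P : 𝒳 → 𝒰 → (𝒳 → ℝ) → 𝒳 → ℝ)
    (r : 𝒳 → 𝒰 → (𝒳 → ℝ) → ℝ) (μ0 : 𝒳 → ℝ)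
    (πe : ℝ → ℕ → 𝒳 → 𝒰 → ℝ) (μ : ℕ → ℝ → 𝒳 → ℝ) : Prop :=
  (∀ t x u, Measurable fun α => πe α t x u) ∧
  (∀ α ∈ Set.Icc (0:ℝ) 1, IsPolicy (πe α)) ∧
  IsMeanFieldOf W P μ0 πe μ ∧
  ∀ α ∈ Set.Icc (0:ℝ) 1, ∀ π' : ℕ → 𝒳 → 𝒰 → ℝ, IsPolicy π' →
    Jmf T r P μ0 (fun t => nbhd W (μ t) α) π' ≤ Jmf T r P μ0 (fun t => nbhd W (μ t) α) (πe α)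

/-- α ↦ π^α is Lipschitz continuous up to a finite set D of discontinuities. -/
def EnsembleLipschitzUpTo [Fintype 𝒳] [Fintype 𝒰] (πe : ℝ → ℕ → 𝒳 → 𝒰 → ℝ) : Prop :=
  ∃ (L : ℝ) (D : Finset ℝ), ∀ (t : ℕ) (x : 𝒳) (u : 𝒰),
    ∀ α ∈ Set.Icc (0:ℝ) 1, ∀ β ∈ Set.Icc (0:ℝ) 1,
      (∀ d ∈ D, d ∉ Set.uIcc α β) → |πe α t x u - πe β t x u| ≤ L * |α - β|

/-- Edge indicators of a simple (undirected) graph. -/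
def IsEdgeWeights {N : ℕ} (ξ : Fin N → Fin N → ℝ) : Prop :=
  (∀ i j, ξ i j = 0 ∨ ξ i j = 1) ∧ ∀ i j, ξ i j = ξ j i

/-- Empirical neighborhood mean field 𝔾ⁱ = (1/N) Σ_j ξ_{ij} δ_{X^j}. -/
noncomputable def empNbhd [Fintype 𝒳] [DecidableEq 𝒳] {N : ℕ} (ξ : Fin N → Fin N → ℝ)
    (X : Fin N → 𝒳) (i : Fin N) : 𝒳 → ℝ :=
  fun x => (N : ℝ)⁻¹ * ∑ j, ξ i j * (if X j = x then 1 else 0)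

/-- The joint law of the N agents' states at time t: X^i_0 ∼ μ₀ i.i.d.,
U^i_t ∼ π^i_t(·|X^i_t), X^i_{t+1} ∼ P(·|X^i_t,U^i_t,𝔾^i_t) conditionally independently. -/
noncomputable def jointLaw [Fintype 𝒳] [DecidableEq 𝒳] [Fintype 𝒰] {N : ℕ}
    (P : 𝒳 → 𝒰 → (𝒳 → ℝ) → 𝒳 → ℝ) (μ0 : 𝒳 → ℝ) (ξ : Fin N → Fin N → ℝ)
    (πs : Fin N → ℕ → 𝒳 → 𝒰 → ℝ) : ℕ → (Fin N → 𝒳) → ℝ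
  | 0 => fun X => ∏ i, μ0 (X i)
  | (t+1) => fun Y => ∑ X : Fin N → 𝒳, jointLaw P μ0 ξ πs t X *
      ∏ i, ∑ u, πs i t (X i) u * P (X i) u (empNbhd ξ X i) (Y i)

/-- The objective J^N_i = E[Σ_{t<T} r(X^i_t,U^i_t,𝔾^i_t)] of agent i in the N-agent game. -/
noncomputable def JN [Fintype 𝒳] [DecidableEq 𝒳] [Fintype 𝒰] {N : ℕ} (T : ℕ)
    (r : 𝒳 → 𝒰 → (𝒳 → ℝ) → ℝ) (P : 𝒳 → 𝒰 → (𝒳 → ℝ) → 𝒳 → ℝ) (μ0 : 𝒳 → ℝ)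
    (ξ : Fin N → Fin N → ℝ) (πs : Fin N → ℕ → 𝒳 → 𝒰 → ℝ) (i : Fin N) : ℝ :=
  ∑ t ∈ Finset.range T, ∑ X : Fin N → 𝒳, jointLaw P μ0 ξ πs t X *
    ∑ u, πs i t (X i) u * r (X i) u (empNbhd ξ X i)

/-- Γ_N(𝛑) = (π^{1/N},…,π^{N/N}) (agent i : Fin N has graphon index (i+1)/N). -/
noncomputable def gammaN (πe : ℝ → ℕ → 𝒳 → 𝒰 → ℝ) (N : ℕ) : Fin N → ℕ → 𝒳 → 𝒰 → ℝ :=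
  fun i => πe ((((i : ℕ) : ℝ) + 1) / N)

/-- The step graphon W_N of a finite graph: W_N(x,y) = ξ_{⌈Nx⌉,⌈Ny⌉}. -/
noncomputable def stepGraphon {N : ℕ} (ξ : Fin N → Fin N → ℝ) : ℝ → ℝ → ℝ := fun a b =>
  ∑ i : Fin N, ∑ j : Fin N,
    (if ((i : ℕ) : ℝ) / N < a ∧ a ≤ (((i : ℕ) : ℝ) + 1) / N then 1 else 0) *
    (if ((j : ℕ) : ℝ) / N < b ∧ b ≤ (((j : ℕ) : ℝ) + 1) / N then 1 else 0) * ξ i j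

/-- Assumption (W): ‖W_N − W‖_{L∞→L1} → 0, i.e.
sup_{‖g‖∞ ≤ 1} ∫₀¹ |∫₀¹ (W_N(α,β) − W(α,β)) g(β) dβ| dα → 0. -/
def OpConvergesTo (WN : (N : ℕ) → ℝ → ℝ → ℝ) (W : ℝ → ℝ → ℝ) : Prop :=
  ∀ ε > (0:ℝ), ∃ N₀ : ℕ, ∀ N ≥ N₀, ∀ g : ℝ → ℝ, Measurable g → (∀ β, |g β| ≤ 1) →
    (∫ α in Set.Ioc (0:ℝ) 1, |∫ β in Set.Ioc (0:ℝ) 1, (WN N α β - W α β) * g β|) ≤ ε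

/-- ‖W_N − W‖_{L∞→L1} = O(1/√N). -/
def OpRateSqrt (WN : (N : ℕ) → ℝ → ℝ → ℝ) (W : ℝ → ℝ → ℝ) : Prop :=
  ∃ C : ℝ, ∀ N : ℕ, 1 ≤ N → ∀ g : ℝ → ℝ, Measurable g → (∀ β, |g β| ≤ 1) →
    (∫ α in Set.Ioc (0:ℝ) 1, |∫ β in Set.Ioc (0:ℝ) 1, (WN N α β - W α β) * g β|) ≤ C / Real.sqrt N

/-- 𝛍^N_t(f) = ∫₀¹ f(X^{⌈Nα⌉}, α) dα, the integral of f against the random empirical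
step measure ensemble. -/
noncomputable def empInt [Fintype 𝒳] {N : ℕ} (f : 𝒳 → ℝ → ℝ) (X : Fin N → 𝒳) : ℝ :=
  ∑ i : Fin N, ∫ α in Set.Ioc (((i : ℕ) : ℝ) / N) ((((i : ℕ) : ℝ) + 1) / N), f (X i) α

/-- 𝛍_t(f) = ∫₀¹ Σ_x f(x,α) μ^α_t(x) dα. -/
noncomputable def mfInt [Fintype 𝒳] (f : 𝒳 → ℝ → ℝ) (ν : ℝ → 𝒳 → ℝ) : ℝ :=
  ∫ α in Set.Ioc (0:ℝ) 1, ∑ x, f x α * ν α x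

/-- The representative α_m = (m+1)/M of the m-th equivalence class Ĩ_m = (m/M,(m+1)/M]. -/
noncomputable def rep (M : ℕ) (m : Fin M) : ℝ := (((m : ℕ) : ℝ) + 1) / M

/-- Discretized neighborhood mean field 𝔾̂^{α_m} = (1/M) Σ_n W(α_m,α_n) ν^{α_n}. -/
noncomputable def approxNbhd [Fintype 𝒳] {M : ℕ} (W : ℝ → ℝ → ℝ) (ν : Fin M → 𝒳 → ℝ)
    (m : Fin M) : 𝒳 → ℝ :=
  fun x => (M : ℝ)⁻¹ * ∑ n, W (rep M m) (rep M n) * ν n x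

/-- The approximate mean field μ̂ = Ψ̂(𝛑) of the M equivalence classes method. -/
noncomputable def approxMF [Fintype 𝒳] [Fintype 𝒰] {M : ℕ} (W : ℝ → ℝ → ℝ)
    (P : 𝒳 → 𝒰 → (𝒳 → ℝ) → 𝒳 → ℝ) (μ0 : 𝒳 → ℝ) (πm : Fin M → ℕ → 𝒳 → 𝒰 → ℝ) :
    ℕ → Fin M → 𝒳 → ℝ
  | 0 => fun _ => μ0
  | (t+1) => fun m x' => ∑ x, approxMF W P μ0 πm t m x *
      ∑ u, πm m t x u * P x u (approxNbhd W (approxMF W P μ0 πm t) m) x'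

/-- A solution (𝛑, 𝛍) of the M equivalence classes method: 𝛑 is determined by policies
π^{α_m} (one per class), each optimal for the generated approximate mean field 𝛍 = Ψ̂(𝛑). -/
def IsEqClassSolution [Fintype 𝒳] [Fintype 𝒰] (T : ℕ) {M : ℕ} (W : ℝ → ℝ → ℝ)
    (P : 𝒳 → 𝒰 → (𝒳 → ℝ) → 𝒳 → ℝ) (r : 𝒳 → 𝒰 → (𝒳 → ℝ) → ℝ) (μ0 : 𝒳 → ℝ)
    (πm : Fin M → ℕ → 𝒳 → 𝒰 → ℝ) : Prop :=
  (∀ m, IsPolicy (πm m)) ∧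
  ∀ m, ∀ π' : ℕ → 𝒳 → 𝒰 → ℝ, IsPolicy π' →
    Jmf T r P μ0 (fun t => approxNbhd W (approxMF W P μ0 πm t) m) π'
      ≤ Jmf T r P μ0 (fun t => approxNbhd W (approxMF W P μ0 πm t) m) (πm m)

/-- The optimal action value function Q with k steps to go from time t,
Q(t,x,u) = r(x,u,G_t) + Σ_{x'} P(x'|x,u,G_t) max_{u'} Q(t+1,x',u'). -/
noncomputable def Qfun [Fintype 𝒳] [Fintype 𝒰] [Nonempty 𝒰] (r : 𝒳 → 𝒰 → (𝒳 → ℝ) → ℝ)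
    (P : 𝒳 → 𝒰 → (𝒳 → ℝ) → 𝒳 → ℝ) (G : ℕ → 𝒳 → ℝ) : ℕ → ℕ → 𝒳 → 𝒰 → ℝ
  | 0 => fun _ _ _ => 0
  | (k+1) => fun t x u => r x u (G t) + ∑ x', P x u (G t) x' *
      Finset.univ.sup' Finset.univ_nonempty (fun u' => Qfun r P G k (t+1) x' u')

/-- The Boltzmann (softmax) policy Φ̂_η(𝛍) of the M equivalence classes method with
horizon T, temperature η and block mean field ν. -/
noncomputable def boltzmann [Fintype 𝒳] [Fintype 𝒰] [Nonempty 𝒰] (T : ℕ) (η : ℝ)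
    (r : 𝒳 → 𝒰 → (𝒳 → ℝ) → ℝ) (P : 𝒳 → 𝒰 → (𝒳 → ℝ) → 𝒳 → ℝ) (W : ℝ → ℝ → ℝ) {M : ℕ}
    (ν : ℕ → Fin M → 𝒳 → ℝ) : Fin M → ℕ → 𝒳 → 𝒰 → ℝ :=
  fun m t x u =>
    Real.exp (Qfun r P (fun s => approxNbhd W (ν s) m) (T - t) t x u / η) /
      ∑ u' : 𝒰, Real.exp (Qfun r P (fun s => approxNbhd W (ν s) m) (T - t) t x u' / η)

/-- One step 𝛍 ↦ Ψ̂(Φ̂_η(𝛍)) of the Boltzmann fixed point iteration. -/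
noncomputable def boltzIter [Fintype 𝒳] [Fintype 𝒰] [Nonempty 𝒰] (T : ℕ) (η : ℝ)
    (r : 𝒳 → 𝒰 → (𝒳 → ℝ) → ℝ) (P : 𝒳 → 𝒰 → (𝒳 → ℝ) → 𝒳 → ℝ) (W : ℝ → ℝ → ℝ) (μ0 : 𝒳 → ℝ)
    {M : ℕ} (ν : ℕ → Fin M → 𝒳 → ℝ) : ℕ → Fin M → 𝒳 → ℝ :=
  fun t => approxMF W P μ0 (boltzmann T η r P W ν) t

/-!
Conditionally on the states at time `t`, the agents move independently. Hence averages of bounded,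
possibly agent-dependent, observables of the states at time `t + 1` concentrate up to `1 / √N` and
up to the mean distance between the empirical neighborhood mean fields at time `t` and the limiting
ones. That distance is in turn controlled by such averages, since the field of agent `i` averages
`ξ i j` times the indicator of `X j = x` over `j`, and by the error of the limiting fields
themselves, so the concentration propagates in time by a discrete Grönwall argument; a single
deviating agent costs `2 / N`.

The error of the limiting fields, averaged over the agents, tends to `0`: the mean field is almost
everywhere continuous in the graphon index, so sampling it at the points `i / N` is harmless in
`L¹`, and replacing `W` by the step graphon is controlled by the operator norm `L∞ → L¹`. Since
only averages over the agents are controlled, Markov's inequality selects the good agents. The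
selection is uniform in the deviating policy because a deviating agent feels the others only
through its neighborhood mean field.
-/

section Expectation

variable {Ω Ω' : Type*} [Fintype Ω] [Fintype Ω']

/-- The expectation of `F` under the mass function `w` on a finite set. -/
noncomputable def expect (w F : Ω → ℝ) : ℝ := ∑ ω, w ω * F ω

/-- The mixture `∑_ω w(ω) K(ω, ·)`: the law of the outcome of the kernel `K` started from
the law `w`. -/
noncomputable def mixture (w : Ω → ℝ) (K : Ω → Ω' → ℝ) : Ω' → ℝ :=
  fun ω' => expect w fun ω => K ω ω'

lemma expect_add (w F G : Ω → ℝ) :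
    expect w (fun ω => F ω + G ω) = expect w F + expect w G := by
  simp only [expect, mul_add, Finset.sum_add_distrib]

lemma expect_sub (w F G : Ω → ℝ) :
    expect w (fun ω => F ω - G ω) = expect w F - expect w G := by
  simp only [expect, mul_sub, Finset.sum_sub_distrib]

lemma expect_const_mul (w : Ω → ℝ) (c : ℝ) (F : Ω → ℝ) :
    expect w (fun ω => c * F ω) = c * expect w F := by
  simp only [expect, Finset.mul_sum, mul_left_comm]

lemma expect_sum {ι : Type*} (w : Ω → ℝ) (s : Finset ι) (F : ι → Ω → ℝ) :
    expect w (fun ω => ∑ i ∈ s, F i ω) = ∑ i ∈ s, expect w (F i) := by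
  simp only [expect, Finset.mul_sum]
  exact Finset.sum_comm

lemma expect_mixture (w : Ω → ℝ) (K : Ω → Ω' → ℝ) (F : Ω' → ℝ) :
    expect (mixture w K) F = expect w fun ω => expect (K ω) F := by
  simp only [mixture, expect, Finset.sum_mul, Finset.mul_sum, mul_assoc]
  exact Finset.sum_comm

lemma expect_const {w : Ω → ℝ} (hw : w ∈ simplex Ω) (c : ℝ) : expect w (fun _ => c) = c := by
  rw [expect, ← Finset.sum_mul, hw.2, one_mul]

lemma expect_mono {w F G : Ω → ℝ} (hw : ∀ ω, 0 ≤ w ω) (h : ∀ ω, F ω ≤ G ω) :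
    expect w F ≤ expect w G :=
  Finset.sum_le_sum fun ω _ => mul_le_mul_of_nonneg_left (h ω) (hw ω)

lemma expect_nonneg {w F : Ω → ℝ} (hw : ∀ ω, 0 ≤ w ω) (hF : ∀ ω, 0 ≤ F ω) : 0 ≤ expect w F :=
  Finset.sum_nonneg fun ω _ => mul_nonneg (hw ω) (hF ω)

lemma abs_expect_le_expect_abs {w : Ω → ℝ} (hw : ∀ ω, 0 ≤ w ω) (F : Ω → ℝ) :
    |expect w F| ≤ expect w fun ω => |F ω| := by
  refine (Finset.abs_sum_le_sum_abs _ _).trans_eq (Finset.sum_congr rfl fun ω _ => ?_)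
  rw [abs_mul, abs_of_nonneg (hw ω)]

lemma abs_expect_le {w F : Ω → ℝ} (hw : w ∈ simplex Ω) {c : ℝ} (hF : ∀ ω, |F ω| ≤ c) :
    |expect w F| ≤ c :=
  calc |expect w F| ≤ expect w fun ω => |F ω| := abs_expect_le_expect_abs hw.1 F
    _ ≤ expect w fun _ => c := expect_mono hw.1 hF
    _ = c := expect_const hw c

lemma sq_expect_abs_le {w : Ω → ℝ} (hw : w ∈ simplex Ω) (F : Ω → ℝ) :
    (expect w fun ω => |F ω|) ^ 2 ≤ expect w fun ω => F ω ^ 2 := by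
  have cauchy_schwarz := Finset.sum_sq_le_sum_mul_sum_of_sq_le_mul Finset.univ
    (r := fun ω => w ω * |F ω|) (f := w) (g := fun ω => w ω * F ω ^ 2)
    (fun ω _ => hw.1 ω) (fun ω _ => mul_nonneg (hw.1 ω) (sq_nonneg _))
    (fun ω _ => by rw [mul_pow, sq_abs, sq, mul_assoc])
  rwa [hw.2, one_mul] at cauchy_schwarz

lemma mixture_mem_simplex {w : Ω → ℝ} (hw : w ∈ simplex Ω) {K : Ω → Ω' → ℝ}
    (hK : ∀ ω, K ω ∈ simplex Ω') : mixture w K ∈ simplex Ω' := by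
  refine ⟨fun ω' => expect_nonneg hw.1 fun ω => (hK ω).1 ω', ?_⟩
  simp only [mixture, ← expect_sum, (hK _).2, expect_const hw]

lemma mem_Icc_of_mem_simplex {p : Ω → ℝ} (hp : p ∈ simplex Ω) (ω : Ω) :
    p ω ∈ Set.Icc (0 : ℝ) 1 :=
  ⟨hp.1 ω, hp.2 ▸ Finset.single_le_sum (fun ω' _ => hp.1 ω') (Finset.mem_univ ω)⟩

lemma abs_le_one_of_mem_Icc {a : ℝ} (ha : a ∈ Set.Icc (0 : ℝ) 1) : |a| ≤ 1 :=
  (abs_of_nonneg ha.1).trans_le ha.2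

lemma l1dist_nonneg (p q : Ω → ℝ) : 0 ≤ l1dist p q :=
  Finset.sum_nonneg fun _ _ => abs_nonneg _

lemma l1dist_self (p : Ω → ℝ) : l1dist p p = 0 := by
  simp only [l1dist, sub_self, abs_zero, Finset.sum_const_zero]

lemma l1dist_triangle (p q r : Ω → ℝ) : l1dist p r ≤ l1dist p q + l1dist q r := by
  simp only [l1dist, ← Finset.sum_add_distrib]
  exact Finset.sum_le_sum fun ω _ => abs_sub_le _ _ _

lemma abs_sub_le_l1dist (p q : Ω → ℝ) (ω : Ω) : |p ω - q ω| ≤ l1dist p q :=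
  Finset.single_le_sum (f := fun ω' => |p ω' - q ω'|) (fun _ _ => abs_nonneg _)
    (Finset.mem_univ ω)

lemma l1dist_le_two {p q : Ω → ℝ} (hp : p ∈ simplex Ω) (hq : q ∈ simplex Ω) :
    l1dist p q ≤ 2 := by
  calc l1dist p q ≤ ∑ ω, (p ω + q ω) := Finset.sum_le_sum fun ω _ => by
        rw [abs_le]; constructor <;> linarith [hp.1 ω, hq.1 ω]
    _ = 2 := by rw [Finset.sum_add_distrib, hp.2, hq.2]; norm_num

lemma abs_expect_sub_expect_le (p q : Ω → ℝ) {F : Ω → ℝ} {c : ℝ} (hF : ∀ ω, |F ω| ≤ c) :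
    |expect p F - expect q F| ≤ c * l1dist p q := by
  simp only [expect, l1dist, ← Finset.sum_sub_distrib, ← sub_mul, Finset.mul_sum]
  refine (Finset.abs_sum_le_sum_abs _ _).trans (Finset.sum_le_sum fun ω _ => ?_)
  rw [abs_mul, mul_comm]
  exact mul_le_mul_of_nonneg_right (hF ω) (abs_nonneg _)

lemma l1dist_mixture_le {w : Ω → ℝ} (hw : w ∈ simplex Ω) {K K' : Ω → Ω' → ℝ} {c : ℝ}
    (hK : ∀ ω, l1dist (K ω) (K' ω) ≤ c) : l1dist (mixture w K) (mixture w K') ≤ c :=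
  calc l1dist (mixture w K) (mixture w K')
      ≤ ∑ ω', expect w fun ω => |K ω ω' - K' ω ω'| := Finset.sum_le_sum fun ω' _ => by
        rw [mixture, mixture, ← expect_sub]
        exact abs_expect_le_expect_abs hw.1 _
    _ = expect w fun ω => l1dist (K ω) (K' ω) := (expect_sum w _ _).symm
    _ ≤ expect w fun _ => c := expect_mono hw.1 hK
    _ = c := expect_const hw c

end Expectation

section ProductLaws

variable {ι : Type*} [Fintype ι] [Fintype 𝒳]

/-- The law of independent random variables `Y i ∼ q i`. -/
noncomputable def prodLaw (q : ι → 𝒳 → ℝ) : (ι → 𝒳) → ℝ := fun Y => ∏ i, q i (Y i)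

variable [DecidableEq ι] {q : ι → 𝒳 → ℝ}

lemma expect_prodLaw_prod (q h : ι → 𝒳 → ℝ) :
    expect (prodLaw q) (fun Y => ∏ i, h i (Y i)) = ∏ i, expect (q i) (h i) := by
  simp only [expect, prodLaw, ← Finset.prod_mul_distrib]
  rw [Finset.prod_univ_sum, Fintype.piFinset_univ]

lemma prodLaw_mem_simplex (hq : ∀ i, q i ∈ simplex 𝒳) : prodLaw q ∈ simplex (ι → 𝒳) := by
  refine ⟨fun Y => Finset.prod_nonneg fun i _ => (hq i).1 _, ?_⟩
  have total := expect_prodLaw_prod q fun _ _ => 1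
  simp only [Finset.prod_const_one, expect_const (hq _)] at total
  simpa only [expect, mul_one] using total

lemma expect_prodLaw_mul (hq : ∀ i, q i ∈ simplex 𝒳) {j k : ι} (hjk : j ≠ k) (f g : 𝒳 → ℝ) :
    expect (prodLaw q) (fun Y => f (Y j) * g (Y k)) = expect (q j) f * expect (q k) g := by
  have factor := expect_prodLaw_prod q
    fun i y => (if i = j then f y else 1) * (if i = k then g y else 1)
  simp only [Finset.prod_mul_distrib, Finset.prod_ite_eq', Finset.mem_univ, if_true] at factor
  rw [factor, Finset.prod_eq_mul j k hjk]
  · simp only [if_true, hjk, hjk.symm, if_false, mul_one, one_mul]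
  · rintro i - ⟨hij, hik⟩
    simp only [hij, hik, if_false, mul_one, expect_const (hq i)]
  all_goals simp only [Finset.mem_univ, not_true_eq_false, false_implies]

lemma expect_prodLaw_apply (hq : ∀ i, q i ∈ simplex 𝒳) (j : ι) (f : 𝒳 → ℝ) :
    expect (prodLaw q) (fun Y => f (Y j)) = expect (q j) f := by
  have factor := expect_prodLaw_prod q fun i y => if i = j then f y else 1
  simp only [Finset.prod_ite_eq', Finset.mem_univ, if_true] at factor
  rw [factor, Finset.prod_eq_single j]
  · simp only [if_true]
  · intro i _ hij
    simp only [hij, if_false, expect_const (hq i)]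
  · simp only [Finset.mem_univ, not_true_eq_false, false_implies]

lemma expect_sub_expect_sq_le {p : 𝒳 → ℝ} (hp : p ∈ simplex 𝒳) {f : 𝒳 → ℝ}
    (hf : ∀ y, |f y| ≤ 1) : expect p (fun y => (f y - expect p f) ^ 2) ≤ 1 := by
  have expand : ∀ y, (f y - expect p f) ^ 2
      = f y ^ 2 - (2 * expect p f * f y - expect p f ^ 2) := fun y => by ring
  have second_moment : expect p (fun y => f y ^ 2) ≤ 1 :=
    (expect_mono hp.1 fun y => (sq_le_one_iff_abs_le_one _).2 (hf y)).trans_eq (expect_const hp 1)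
  simp only [expand, expect_sub, expect_const_mul, expect_const hp]
  nlinarith [sq_nonneg (expect p f)]

lemma expect_prodLaw_sum_centered_sq_le (hq : ∀ i, q i ∈ simplex 𝒳) {f : ι → 𝒳 → ℝ}
    (hf : ∀ i y, |f i y| ≤ 1) :
    expect (prodLaw q) (fun Y => (∑ j, (f j (Y j) - expect (q j) (f j))) ^ 2)
      ≤ Fintype.card ι := by
  have uncorrelated : ∀ j k, j ≠ k → expect (prodLaw q) (fun Y =>
      (f j (Y j) - expect (q j) (f j)) * (f k (Y k) - expect (q k) (f k))) = 0 := fun j k hjk => by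
    rw [expect_prodLaw_mul hq hjk (fun y => f j y - expect (q j) (f j))
      fun y => f k y - expect (q k) (f k), expect_sub, expect_const (hq j), sub_self, zero_mul]
  simp only [sq, Finset.sum_mul_sum, expect_sum]
  calc ∑ j, ∑ k, expect (prodLaw q) (fun Y =>
        (f j (Y j) - expect (q j) (f j)) * (f k (Y k) - expect (q k) (f k)))
      = ∑ j, expect (q j) fun y => (f j y - expect (q j) (f j)) ^ 2 :=
        Finset.sum_congr rfl fun j _ => by
          rw [Finset.sum_eq_single_of_mem j (Finset.mem_univ j)
            fun k _ hkj => uncorrelated j k hkj.symm]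
          simp only [← sq]
          exact expect_prodLaw_apply hq j fun y => (f j y - expect (q j) (f j)) ^ 2
    _ ≤ ∑ _ : ι, (1 : ℝ) := Finset.sum_le_sum fun j _ => expect_sub_expect_sq_le (hq j) (hf j)
    _ = Fintype.card ι := by simp only [Finset.sum_const, Finset.card_univ, nsmul_eq_mul, mul_one]

lemma expect_prodLaw_abs_sum_centered_le (hq : ∀ i, q i ∈ simplex 𝒳) {f : ι → 𝒳 → ℝ}
    (hf : ∀ i y, |f i y| ≤ 1) :
    expect (prodLaw q) (fun Y => |∑ j, (f j (Y j) - expect (q j) (f j))|)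
      ≤ √(Fintype.card ι) :=
  Real.le_sqrt_of_sq_le <|
    (sq_expect_abs_le (prodLaw_mem_simplex hq) _).trans (expect_prodLaw_sum_centered_sq_le hq hf)

end ProductLaws

section Concentration

variable [Fintype 𝒳] {N : ℕ}

/-- The distance between the average of the observables `f j` over the states `X j` and its
prediction by independent `X j ∼ m j`. -/
noncomputable def avgDeviation (m f : Fin N → 𝒳 → ℝ) (X : Fin N → 𝒳) : ℝ :=
  |(N : ℝ)⁻¹ * ∑ j, (f j (X j) - expect (m j) (f j))|

/-- Law of large numbers with error `e` for a joint law `w` of `N` states: averages of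
observables bounded by `1` are, in mean, `e`-close to their prediction by the laws `m j`.
The observables may differ from agent to agent. -/
def Concentrates (w : (Fin N → 𝒳) → ℝ) (m : Fin N → 𝒳 → ℝ) (e : ℝ) : Prop :=
  ∀ f : Fin N → 𝒳 → ℝ, (∀ j y, |f j y| ≤ 1) → expect w (avgDeviation m f) ≤ e

lemma concentrates_prodLaw {q : Fin N → 𝒳 → ℝ} (hq : ∀ i, q i ∈ simplex 𝒳) :
    Concentrates (prodLaw q) q (1 / √N) := by
  intro f hf
  have bound := expect_prodLaw_abs_sum_centered_le hq hf
  rw [Fintype.card_fin] at bound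
  calc expect (prodLaw q) (fun Y => avgDeviation q f Y)
      = (N : ℝ)⁻¹ * expect (prodLaw q) (fun Y => |∑ j, (f j (Y j) - expect (q j) (f j))|) := by
        simp only [avgDeviation, abs_mul, expect_const_mul, abs_inv, Nat.abs_cast]
    _ ≤ (N : ℝ)⁻¹ * √N := by gcongr
    _ = 1 / √N := by rw [inv_mul_eq_div, Real.sqrt_div_self', one_div]

lemma avgDeviation_mixture_le (q m : Fin N → 𝒳 → ℝ) (k : Fin N → 𝒳 → 𝒳 → ℝ)
    {f : Fin N → 𝒳 → ℝ} (hf : ∀ j y, |f j y| ≤ 1) (X Y : Fin N → 𝒳) :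
    avgDeviation (fun j => mixture (m j) (k j)) f Y ≤
      avgDeviation q f Y + (N : ℝ)⁻¹ * ∑ j, l1dist (q j) (k j (X j))
        + avgDeviation m (fun j x => expect (k j x) (f j)) X := by
  have split : (N : ℝ)⁻¹ * ∑ j, (f j (Y j) - expect (mixture (m j) (k j)) (f j))
      = (N : ℝ)⁻¹ * ∑ j, (f j (Y j) - expect (q j) (f j))
        + (N : ℝ)⁻¹ * ∑ j, (expect (q j) (f j) - expect (k j (X j)) (f j))
        + (N : ℝ)⁻¹ * ∑ j, (expect (k j (X j)) (f j)
            - expect (m j) fun x => expect (k j x) (f j)) := by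
    simp only [expect_mixture, Finset.sum_sub_distrib]
    ring
  have middle : |(N : ℝ)⁻¹ * ∑ j, (expect (q j) (f j) - expect (k j (X j)) (f j))|
      ≤ (N : ℝ)⁻¹ * ∑ j, l1dist (q j) (k j (X j)) := by
    rw [abs_mul, abs_inv, Nat.abs_cast]
    gcongr
    refine (Finset.abs_sum_le_sum_abs _ _).trans (Finset.sum_le_sum fun j _ => ?_)
    simpa only [one_mul] using abs_expect_sub_expect_le (q j) (k j (X j)) (hf j)
  rw [avgDeviation, split]
  exact (abs_add_three _ _ _).trans (by gcongr; exacts [le_rfl, le_rfl])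

lemma Concentrates.mixture {w : (Fin N → 𝒳) → ℝ} (hw : w ∈ simplex (Fin N → 𝒳))
    {m : Fin N → 𝒳 → ℝ} {e : ℝ} (h : Concentrates w m e) {q : (Fin N → 𝒳) → Fin N → 𝒳 → ℝ}
    (hq : ∀ X j, q X j ∈ simplex 𝒳) {k : Fin N → 𝒳 → 𝒳 → ℝ} (hk : ∀ j x, k j x ∈ simplex 𝒳) :
    Concentrates (mixture w fun X => prodLaw (q X)) (fun j => mixture (m j) (k j))
      (1 / √N + (N : ℝ)⁻¹ * ∑ j, expect w (fun X => l1dist (q X j) (k j (X j))) + e) := by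
  intro f hf
  set H : Fin N → 𝒳 → ℝ := fun j x => expect (k j x) (f j)
  have conditional : ∀ X,
      expect (prodLaw (q X)) (avgDeviation (fun j => GMFG.mixture (m j) (k j)) f)
        ≤ 1 / √N + (N : ℝ)⁻¹ * ∑ j, l1dist (q X j) (k j (X j)) + avgDeviation m H X := fun X => by
    have hqX := prodLaw_mem_simplex (hq X)
    refine (expect_mono hqX.1 fun Y => avgDeviation_mixture_le (q X) m k hf X Y).trans ?_
    rw [expect_add, expect_add, expect_const hqX, expect_const hqX]
    gcongr
    exact concentrates_prodLaw (hq X) f hf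
  rw [expect_mixture]
  refine (expect_mono hw.1 conditional).trans ?_
  rw [expect_add, expect_add, expect_const hw, expect_const_mul, expect_sum]
  gcongr
  exact h H fun j x => abs_expect_le (hk j x) (hf j)

end Concentration

lemma average_const_add {N : ℕ} [NeZero N] (c : ℝ) (a : Fin N → ℝ) :
    (N : ℝ)⁻¹ * ∑ j, (c + a j) = c + (N : ℝ)⁻¹ * ∑ j, a j := by
  rw [Finset.sum_add_distrib, mul_add, Finset.sum_const, Finset.card_univ, Fintype.card_fin,
    nsmul_eq_mul, inv_mul_cancel_left₀ (NeZero.ne (N : ℝ))]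

lemma isPolicy_update {ι : Type*} [DecidableEq ι] [Fintype 𝒰] {πs : ι → ℕ → 𝒳 → 𝒰 → ℝ}
    (hπs : ∀ i, IsPolicy (πs i)) (i : ι) {πd : ℕ → 𝒳 → 𝒰 → ℝ} (hπd : IsPolicy πd) (k : ι) :
    IsPolicy (Function.update πs i πd k) :=
  (Function.forall_update_iff πs fun _ => IsPolicy).2 ⟨hπd, fun k _ => hπs k⟩ k

section NAgentSystem

variable [Fintype 𝒳] [Fintype 𝒰] {P : 𝒳 → 𝒰 → (𝒳 → ℝ) → 𝒳 → ℝ} {μ0 : 𝒳 → ℝ} {L : ℝ}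

/-- The law of the next state of an agent in state `x` that follows the decision rule `p` in
the neighborhood mean field `G`. -/
noncomputable def stepLaw (P : 𝒳 → 𝒰 → (𝒳 → ℝ) → 𝒳 → ℝ) (p : 𝒳 → 𝒰 → ℝ) (G : 𝒳 → ℝ)
    (x : 𝒳) : 𝒳 → ℝ :=
  mixture (p x) fun u => P x u G

lemma stateLaw_succ (P : 𝒳 → 𝒰 → (𝒳 → ℝ) → 𝒳 → ℝ) (μ0 : 𝒳 → ℝ) (G : ℕ → 𝒳 → ℝ)
    (π : ℕ → 𝒳 → 𝒰 → ℝ) (t : ℕ) :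
    stateLaw P μ0 G π (t + 1) = mixture (stateLaw P μ0 G π t) (stepLaw P (π t) (G t)) :=
  rfl

lemma stepLaw_mem_simplex (hP : IsKernel P) {p : 𝒳 → 𝒰 → ℝ} (hp : ∀ x, p x ∈ simplex 𝒰)
    {G : 𝒳 → ℝ} (hG : G ∈ subProb 𝒳) (x : 𝒳) : stepLaw P p G x ∈ simplex 𝒳 :=
  mixture_mem_simplex (hp x) fun u => hP x u G hG

lemma l1dist_stepLaw_le (hPLip : KernelLipschitz P L) {p : 𝒳 → 𝒰 → ℝ}
    (hp : ∀ x, p x ∈ simplex 𝒰) {G G' : 𝒳 → ℝ} (hG : G ∈ subProb 𝒳) (hG' : G' ∈ subProb 𝒳)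
    (x : 𝒳) : l1dist (stepLaw P p G x) (stepLaw P p G' x) ≤ L * l1dist G G' :=
  l1dist_mixture_le (hp x) fun u => hPLip x u G G' hG hG'

lemma stateLaw_mem_simplex (hP : IsKernel P) (hμ0 : μ0 ∈ simplex 𝒳) {G : ℕ → 𝒳 → ℝ}
    (hG : ∀ t, G t ∈ subProb 𝒳) {π : ℕ → 𝒳 → 𝒰 → ℝ} (hπ : IsPolicy π) :
    ∀ t, stateLaw P μ0 G π t ∈ simplex 𝒳
  | 0 => hμ0
  | t + 1 => mixture_mem_simplex (stateLaw_mem_simplex hP hμ0 hG hπ t)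
      (stepLaw_mem_simplex hP (hπ t) (hG t))

lemma RewardLipschitz.exists_abs_le {r : 𝒳 → 𝒰 → (𝒳 → ℝ) → ℝ} {Lr : ℝ}
    (hr : RewardLipschitz r Lr) : ∃ R, 0 ≤ R ∧ ∀ x u, ∀ ν ∈ subProb 𝒳, |r x u ν| ≤ R := by
  have zero_mem : (0 : 𝒳 → ℝ) ∈ subProb 𝒳 := ⟨fun _ => le_rfl, by simp⟩
  have mass_le : ∀ ν ∈ subProb 𝒳, l1dist ν 0 ≤ 1 := fun ν hν => by
    simpa only [l1dist, Pi.zero_apply, sub_zero, abs_of_nonneg (hν.1 _)] using hν.2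
  refine ⟨∑ x, ∑ u, |r x u 0| + |Lr|, by positivity, fun x u ν hν => ?_⟩
  have origin : |r x u 0| ≤ ∑ x, ∑ u, |r x u 0| :=
    (Finset.single_le_sum (f := fun u' => |r x u' 0|) (fun _ _ => abs_nonneg _)
      (Finset.mem_univ u)).trans
    (Finset.single_le_sum (f := fun x' => ∑ u', |r x' u' 0|) (fun _ _ => by positivity)
      (Finset.mem_univ x))
  have variation : |r x u ν - r x u 0| ≤ |Lr| :=
    calc |r x u ν - r x u 0| ≤ Lr * l1dist ν 0 := hr x u ν 0 hν zero_mem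
      _ ≤ |Lr| * l1dist ν 0 := mul_le_mul_of_nonneg_right (le_abs_self Lr) (l1dist_nonneg _ _)
      _ ≤ |Lr| := mul_le_of_le_one_right (abs_nonneg Lr) (mass_le ν hν)
  linarith [abs_sub_abs_le_abs_sub (r x u ν) (r x u 0)]

variable {N : ℕ} {ξ : Fin N → Fin N → ℝ}

/-- The neighborhood mean field of agent `j` when every agent `k` is replaced by its law
`m k`. -/
noncomputable def avgNbhd (ξ : Fin N → Fin N → ℝ) (m : Fin N → 𝒳 → ℝ) (j : Fin N) : 𝒳 → ℝ :=
  fun x => (N : ℝ)⁻¹ * ∑ k, ξ j k * m k x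

lemma l1dist_avgNbhd_le (hξ : ∀ i j, |ξ i j| ≤ 1) (m m' : Fin N → 𝒳 → ℝ) (j : Fin N) :
    l1dist (avgNbhd ξ m j) (avgNbhd ξ m' j) ≤ (N : ℝ)⁻¹ * ∑ k, l1dist (m k) (m' k) := by
  simp only [l1dist]
  rw [Finset.sum_comm, Finset.mul_sum]
  refine Finset.sum_le_sum fun x _ => ?_
  rw [avgNbhd, avgNbhd, ← mul_sub, ← Finset.sum_sub_distrib, abs_mul, abs_inv, Nat.abs_cast]
  gcongr
  refine (Finset.abs_sum_le_sum_abs _ _).trans (Finset.sum_le_sum fun k _ => ?_)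
  rw [← mul_sub, abs_mul]
  exact mul_le_of_le_one_left (abs_nonneg _) (hξ j k)

lemma l1dist_avgNbhd_le_of_eq_off (hξ : ∀ i j, |ξ i j| ≤ 1) {m m' : Fin N → 𝒳 → ℝ}
    {i : Fin N} (hm : m i ∈ simplex 𝒳) (hm' : m' i ∈ simplex 𝒳) (heq : ∀ k ≠ i, m k = m' k)
    (j : Fin N) : l1dist (avgNbhd ξ m j) (avgNbhd ξ m' j) ≤ 2 / N :=
  calc l1dist (avgNbhd ξ m j) (avgNbhd ξ m' j) ≤ (N : ℝ)⁻¹ * ∑ k, l1dist (m k) (m' k) :=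
        l1dist_avgNbhd_le hξ m m' j
    _ = (N : ℝ)⁻¹ * l1dist (m i) (m' i) := by
        rw [Finset.sum_eq_single_of_mem i (Finset.mem_univ i)
          fun k _ hk => by rw [heq k hk, l1dist_self]]
    _ ≤ (N : ℝ)⁻¹ * 2 := by gcongr; exact l1dist_le_two hm hm'
    _ = 2 / N := inv_mul_eq_div _ _

variable [DecidableEq 𝒳]

lemma jointLaw_zero (P : 𝒳 → 𝒰 → (𝒳 → ℝ) → 𝒳 → ℝ) (μ0 : 𝒳 → ℝ) (ξ : Fin N → Fin N → ℝ)
    (πs : Fin N → ℕ → 𝒳 → 𝒰 → ℝ) : jointLaw P μ0 ξ πs 0 = prodLaw fun _ => μ0 :=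
  rfl

lemma jointLaw_succ (P : 𝒳 → 𝒰 → (𝒳 → ℝ) → 𝒳 → ℝ) (μ0 : 𝒳 → ℝ) (ξ : Fin N → Fin N → ℝ)
    (πs : Fin N → ℕ → 𝒳 → 𝒰 → ℝ) (t : ℕ) :
    jointLaw P μ0 ξ πs (t + 1) = mixture (jointLaw P μ0 ξ πs t)
      fun X => prodLaw fun i => stepLaw P (πs i t) (empNbhd ξ X i) (X i) :=
  rfl

lemma empNbhd_mem_subProb (hξ : ∀ i j, ξ i j ∈ Set.Icc (0 : ℝ) 1) (X : Fin N → 𝒳) (i : Fin N) :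
    empNbhd ξ X i ∈ subProb 𝒳 := by
  refine ⟨fun x => mul_nonneg (by positivity) (Finset.sum_nonneg fun j _ =>
    mul_nonneg (hξ i j).1 (by split_ifs <;> norm_num)), ?_⟩
  calc ∑ x, empNbhd ξ X i x = (N : ℝ)⁻¹ * ∑ j, ξ i j := by
        simp only [empNbhd]
        rw [← Finset.mul_sum, Finset.sum_comm]
        simp only [← Finset.mul_sum, Finset.sum_ite_eq, Finset.mem_univ, if_true, mul_one]
    _ ≤ (N : ℝ)⁻¹ * ∑ _j : Fin N, 1 := by gcongr with j; exact (hξ i j).2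
    _ ≤ 1 := by
        rw [Finset.sum_const, Finset.card_univ, Fintype.card_fin, nsmul_one]
        exact inv_mul_le_one

lemma jointLaw_mem_simplex (hP : IsKernel P) (hμ0 : μ0 ∈ simplex 𝒳)
    (hξ : ∀ i j, ξ i j ∈ Set.Icc (0 : ℝ) 1) {πs : Fin N → ℕ → 𝒳 → 𝒰 → ℝ}
    (hπs : ∀ i, IsPolicy (πs i)) : ∀ t, jointLaw P μ0 ξ πs t ∈ simplex (Fin N → 𝒳)
  | 0 => prodLaw_mem_simplex fun _ => hμ0
  | t + 1 => mixture_mem_simplex (jointLaw_mem_simplex hP hμ0 hξ hπs t) fun X =>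
      prodLaw_mem_simplex fun i =>
        stepLaw_mem_simplex hP (hπs i t) (empNbhd_mem_subProb hξ X i) (X i)

lemma expect_l1dist_empNbhd_le (hξ : ∀ i j, |ξ i j| ≤ 1) {w : (Fin N → 𝒳) → ℝ}
    (hw : w ∈ simplex (Fin N → 𝒳)) {m : Fin N → 𝒳 → ℝ} {e : ℝ} (h : Concentrates w m e)
    (G : 𝒳 → ℝ) (j : Fin N) :
    expect w (fun X => l1dist (empNbhd ξ X j) G)
      ≤ Fintype.card 𝒳 * e + l1dist (avgNbhd ξ m j) G := by
  let edgeTo (x : 𝒳) (k : Fin N) (y : 𝒳) : ℝ := ξ j k * if y = x then 1 else 0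
  have edgeTo_le : ∀ x k y, |edgeTo x k y| ≤ 1 := fun x k y => by
    simp only [edgeTo]
    split_ifs
    · simpa only [mul_one] using hξ j k
    · simp only [mul_zero, abs_zero, zero_le_one]
  have deviation : ∀ X x, |empNbhd ξ X j x - avgNbhd ξ m j x| = avgDeviation m (edgeTo x) X :=
    fun X x => by
      simp only [empNbhd, avgNbhd, avgDeviation, edgeTo, expect, Finset.sum_sub_distrib, mul_sub,
        mul_ite, mul_one, mul_zero, Finset.sum_ite_eq', Finset.mem_univ, if_true, mul_comm (m _ x)]
  calc expect w (fun X => l1dist (empNbhd ξ X j) G)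
      ≤ expect w (fun X => ∑ x, avgDeviation m (edgeTo x) X + l1dist (avgNbhd ξ m j) G) :=
        expect_mono hw.1 fun X => by
          simp only [← deviation]
          exact l1dist_triangle (empNbhd ξ X j) (avgNbhd ξ m j) G
    _ = ∑ x, expect w (avgDeviation m (edgeTo x)) + l1dist (avgNbhd ξ m j) G := by
        rw [expect_add, expect_const hw, expect_sum]
    _ ≤ ∑ _x : 𝒳, e + l1dist (avgNbhd ξ m j) G := by
        gcongr with x
        exact h _ (edgeTo_le x)
    _ = Fintype.card 𝒳 * e + l1dist (avgNbhd ξ m j) G := by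
        rw [Finset.sum_const, Finset.card_univ, nsmul_eq_mul]

/-- The bound on the law-of-large-numbers error of `N` agents at each time, obtained by a
discrete Grönwall recursion: `L` is the Lipschitz constant of the kernel, `C` the number of
states, and `b t` the mean error of the limiting neighborhood mean fields at time `t`. -/
noncomputable def deviationBound (L C : ℝ) (N : ℕ) (b : ℕ → ℝ) : ℕ → ℝ
  | 0 => 1 / √N
  | t + 1 => 1 / √N + L * (C * deviationBound L C N b t + b t) + deviationBound L C N b t

lemma tendsto_deviationBound (L C : ℝ) {b : ℕ → ℕ → ℝ}
    (hb : ∀ t, Tendsto (fun N => b N t) atTop (nhds 0)) (t : ℕ) :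
    Tendsto (fun N => deviationBound L C N (b N) t) atTop (nhds 0) := by
  have initial : Tendsto (fun N : ℕ => 1 / √(N : ℝ)) atTop (nhds 0) :=
    (Real.tendsto_sqrt_atTop.comp tendsto_natCast_atTop_atTop).const_div_atTop 1
  induction t with
  | zero => exact initial
  | succ t ih =>
    simpa only [deviationBound, mul_zero, add_zero] using
      (initial.add (((ih.const_mul C).add (hb t)).const_mul L)).add ih

lemma jointLaw_concentrates [NeZero N] (hP : IsKernel P) (hL : 0 ≤ L)
    (hPLip : KernelLipschitz P L) (hμ0 : μ0 ∈ simplex 𝒳)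
    (hξ : ∀ i j, ξ i j ∈ Set.Icc (0 : ℝ) 1) {πs : Fin N → ℕ → 𝒳 → 𝒰 → ℝ}
    (hπs : ∀ i, IsPolicy (πs i)) {G : Fin N → ℕ → 𝒳 → ℝ} (hG : ∀ j t, G j t ∈ subProb 𝒳)
    {b : ℕ → ℝ} (hb : ∀ t, (N : ℝ)⁻¹ * ∑ j,
      l1dist (avgNbhd ξ (fun k => stateLaw P μ0 (G k) (πs k) t) j) (G j t) ≤ b t) (t : ℕ) :
    Concentrates (jointLaw P μ0 ξ πs t) (fun j => stateLaw P μ0 (G j) (πs j) t)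
      (deviationBound L (Fintype.card 𝒳) N b t) := by
  induction t with
  | zero => exact concentrates_prodLaw fun _ => hμ0
  | succ t ih =>
    set w := jointLaw P μ0 ξ πs t
    set m := fun k => stateLaw P μ0 (G k) (πs k) t
    set η := deviationBound L (Fintype.card 𝒳) N b t
    have hw : w ∈ simplex (Fin N → 𝒳) := jointLaw_mem_simplex hP hμ0 hξ hπs t
    have kernel_error : ∀ j, expect w (fun X => l1dist
        (stepLaw P (πs j t) (empNbhd ξ X j) (X j)) (stepLaw P (πs j t) (G j t) (X j)))
          ≤ L * (Fintype.card 𝒳 * η + l1dist (avgNbhd ξ m j) (G j t)) := fun j =>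
      (expect_mono hw.1 fun X => l1dist_stepLaw_le hPLip (hπs j t)
        (empNbhd_mem_subProb hξ X j) (hG j t) (X j)).trans <| by
          rw [expect_const_mul]
          gcongr
          exact expect_l1dist_empNbhd_le (fun i j => abs_le_one_of_mem_Icc (hξ i j)) hw ih _ j
    have average_kernel_error : (N : ℝ)⁻¹ * ∑ j,
        L * (Fintype.card 𝒳 * η + l1dist (avgNbhd ξ m j) (G j t))
          ≤ L * (Fintype.card 𝒳 * η + b t) := by
      rw [← Finset.mul_sum, mul_left_comm, average_const_add]
      gcongr
      exact hb t
    intro f hf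
    refine (ih.mixture hw
      (fun X j => stepLaw_mem_simplex hP (hπs j t) (empNbhd_mem_subProb hξ X j) (X j))
      (fun j => stepLaw_mem_simplex hP (hπs j t) (hG j t)) f hf).trans ?_
    rw [deviationBound]
    refine add_le_add (add_le_add le_rfl (le_trans ?_ average_kernel_error)) le_rfl
    gcongr with j
    exact kernel_error j

lemma abs_expect_jointLaw_sub_expect_stateLaw_le (hP : IsKernel P)
    (hPLip : KernelLipschitz P L) (hμ0 : μ0 ∈ simplex 𝒳)
    (hξ : ∀ i j, ξ i j ∈ Set.Icc (0 : ℝ) 1) {πs : Fin N → ℕ → 𝒳 → 𝒰 → ℝ}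
    (hπs : ∀ i, IsPolicy (πs i)) {G : ℕ → 𝒳 → ℝ} (hG : ∀ t, G t ∈ subProb 𝒳) (i : Fin N)
    {c : ℝ} (t : ℕ) {f : 𝒳 → ℝ} (hf : ∀ x, |f x| ≤ c) :
    |expect (jointLaw P μ0 ξ πs t) (fun X => f (X i)) - expect (stateLaw P μ0 G (πs i) t) f|
      ≤ c * ∑ s ∈ Finset.range t,
          L * expect (jointLaw P μ0 ξ πs s) (fun X => l1dist (empNbhd ξ X i) (G s)) := by
  induction t generalizing f with
  | zero =>
    rw [jointLaw_zero, expect_prodLaw_apply (fun _ => hμ0), stateLaw, sub_self, abs_zero,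
      Finset.sum_range_zero, mul_zero]
  | succ t ih =>
    set w := jointLaw P μ0 ξ πs t
    have hw : w ∈ simplex (Fin N → 𝒳) := jointLaw_mem_simplex hP hμ0 hξ hπs t
    have hstep := fun X j => stepLaw_mem_simplex hP (hπs j t) (empNbhd_mem_subProb hξ X j) (X j)
    let h : 𝒳 → ℝ := fun x => expect (stepLaw P (πs i t) (G t) x) f
    have h_le : ∀ x, |h x| ≤ c := fun x =>
      abs_expect_le (stepLaw_mem_simplex hP (hπs i t) (hG t) x) hf
    have kernel_error : ∀ X : Fin N → 𝒳,
        |expect (stepLaw P (πs i t) (empNbhd ξ X i) (X i)) f - h (X i)|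
          ≤ c * (L * l1dist (empNbhd ξ X i) (G t)) := fun X =>
      (abs_expect_sub_expect_le _ _ hf).trans <| mul_le_mul_of_nonneg_left
        (l1dist_stepLaw_le hPLip (hπs i t) (empNbhd_mem_subProb hξ X i) (hG t) (X i))
        ((abs_nonneg _).trans (hf (X i)))
    rw [jointLaw_succ, stateLaw_succ, expect_mixture, expect_mixture]
    simp only [expect_prodLaw_apply (hstep _)]
    calc _ ≤ |expect w (fun X => expect (stepLaw P (πs i t) (empNbhd ξ X i) (X i)) f)
              - expect w (fun X => h (X i))|
            + |expect w (fun X => h (X i)) - expect (stateLaw P μ0 G (πs i) t) h| :=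
          abs_sub_le _ _ _
      _ ≤ expect w (fun X => c * (L * l1dist (empNbhd ξ X i) (G t)))
            + c * ∑ s ∈ Finset.range t,
              L * expect (jointLaw P μ0 ξ πs s) (fun X => l1dist (empNbhd ξ X i) (G s)) := by
          rw [← expect_sub]
          gcongr
          · exact (abs_expect_le_expect_abs hw.1 _).trans (expect_mono hw.1 kernel_error)
          · exact ih h_le
      _ = _ := by
          rw [expect_const_mul, expect_const_mul, Finset.sum_range_succ]
          ring

lemma abs_JN_sub_Jmf_le (hP : IsKernel P) (hL : 0 ≤ L) (hPLip : KernelLipschitz P L)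
    {r : 𝒳 → 𝒰 → (𝒳 → ℝ) → ℝ} {Lr R : ℝ} (hr : RewardLipschitz r Lr) (hR : 0 ≤ R)
    (hrR : ∀ x u, ∀ ν ∈ subProb 𝒳, |r x u ν| ≤ R) (hμ0 : μ0 ∈ simplex 𝒳)
    (hξ : ∀ i j, ξ i j ∈ Set.Icc (0 : ℝ) 1) {πs : Fin N → ℕ → 𝒳 → 𝒰 → ℝ}
    (hπs : ∀ i, IsPolicy (πs i)) {G : ℕ → 𝒳 → ℝ} (hG : ∀ t, G t ∈ subProb 𝒳) (i : Fin N)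
    (T : ℕ) :
    |JN T r P μ0 ξ πs i - Jmf T r P μ0 G (πs i)| ≤ (Lr + T * (R * L)) *
      ∑ t ∈ Finset.range T,
        expect (jointLaw P μ0 ξ πs t) (fun X => l1dist (empNbhd ξ X i) (G t)) := by
  set e : ℕ → ℝ := fun t =>
    expect (jointLaw P μ0 ξ πs t) (fun X => l1dist (empNbhd ξ X i) (G t)) with he
  let reward (t : ℕ) (ν : 𝒳 → ℝ) (x : 𝒳) : ℝ := expect (πs i t x) fun u => r x u ν
  have hw := jointLaw_mem_simplex hP hμ0 hξ hπs
  have reward_lipschitz : ∀ t X, |reward t (empNbhd ξ X i) (X i) - reward t (G t) (X i)|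
      ≤ Lr * l1dist (empNbhd ξ X i) (G t) := fun t X => by
    simp only [reward, ← expect_sub]
    exact abs_expect_le (hπs i t _) fun u => hr _ u _ _ (empNbhd_mem_subProb hξ X i) (hG t)
  have past_le : ∀ t ∈ Finset.range T, R * ∑ s ∈ Finset.range t, L * e s
      ≤ R * L * ∑ s ∈ Finset.range T, e s := fun t ht => by
    rw [← Finset.mul_sum, mul_assoc]
    gcongr
    · exact fun s _ _ => expect_nonneg (hw s).1 fun X => l1dist_nonneg _ _
    · exact (Finset.mem_range.1 ht).le
  have reward_error : ∀ t ∈ Finset.range T,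
      |expect (jointLaw P μ0 ξ πs t) (fun X => reward t (empNbhd ξ X i) (X i))
        - expect (stateLaw P μ0 G (πs i) t) (reward t (G t))|
      ≤ Lr * e t + R * L * ∑ s ∈ Finset.range T, e s := fun t ht => by
    refine (abs_sub_le _ (expect (jointLaw P μ0 ξ πs t) fun X => reward t (G t) (X i)) _).trans
      (add_le_add ?_ ?_)
    · rw [← expect_sub, he, ← expect_const_mul]
      exact (abs_expect_le_expect_abs (hw t).1 _).trans
        (expect_mono (hw t).1 (reward_lipschitz t))
    · exact (abs_expect_jointLaw_sub_expect_stateLaw_le hP hPLip hμ0 hξ hπs hG i t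
        fun x => abs_expect_le (hπs i t x) fun u => hrR x u _ (hG t)).trans (past_le t ht)
  calc |JN T r P μ0 ξ πs i - Jmf T r P μ0 G (πs i)|
      = |∑ t ∈ Finset.range T,
          (expect (jointLaw P μ0 ξ πs t) (fun X => reward t (empNbhd ξ X i) (X i))
            - expect (stateLaw P μ0 G (πs i) t) (reward t (G t)))| := by
        rw [Finset.sum_sub_distrib]; rfl
    _ ≤ ∑ t ∈ Finset.range T, (Lr * e t + R * L * ∑ s ∈ Finset.range T, e s) :=
        (Finset.abs_sum_le_sum_abs _ _).trans (Finset.sum_le_sum reward_error)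
    _ = (Lr + T * (R * L)) * ∑ t ∈ Finset.range T, e t := by
        rw [Finset.sum_add_distrib, ← Finset.mul_sum, Finset.sum_const, Finset.card_range,
          nsmul_eq_mul]
        ring

lemma expect_jointLaw_update_l1dist_le (hP : IsKernel P) (hL : 0 ≤ L)
    (hPLip : KernelLipschitz P L) (hμ0 : μ0 ∈ simplex 𝒳)
    (hξ : ∀ i j, ξ i j ∈ Set.Icc (0 : ℝ) 1) {πs : Fin N → ℕ → 𝒳 → 𝒰 → ℝ}
    (hπs : ∀ i, IsPolicy (πs i)) {G : Fin N → ℕ → 𝒳 → ℝ} (hG : ∀ j t, G j t ∈ subProb 𝒳)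
    {d : ℕ → Fin N → ℝ} (hd : ∀ t j,
      l1dist (avgNbhd ξ (fun k => stateLaw P μ0 (G k) (πs k) t) j) (G j t) ≤ d t j)
    (i : Fin N) {πd : ℕ → 𝒳 → 𝒰 → ℝ} (hπd : IsPolicy πd) (t : ℕ) :
    expect (jointLaw P μ0 ξ (Function.update πs i πd) t)
        (fun X => l1dist (empNbhd ξ X i) (G i t))
      ≤ Fintype.card 𝒳 * deviationBound L (Fintype.card 𝒳) N
          (fun s => 2 / N + (N : ℝ)⁻¹ * ∑ j, d s j) t + (2 / N + d t i) := by
  have : NeZero N := ⟨i.pos.ne'⟩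
  have hξ' := fun i j => abs_le_one_of_mem_Icc (hξ i j)
  have hupdate := isPolicy_update hπs i hπd
  have hlaw := fun {π} (hπ : IsPolicy π) => stateLaw_mem_simplex hP hμ0 (hG i) hπ
  have limit_error : ∀ s j, l1dist (avgNbhd ξ
      (fun k => stateLaw P μ0 (G k) (Function.update πs i πd k) s) j) (G j s) ≤ 2 / N + d s j :=
    fun s j => (l1dist_triangle _ _ _).trans <| add_le_add
      (l1dist_avgNbhd_le_of_eq_off hξ' (hlaw (hupdate i) s) (hlaw (hπs i) s)
        (fun k hk => by rw [Function.update_of_ne hk]) j) (hd s j)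
  have average_error : ∀ s, (N : ℝ)⁻¹ * ∑ j, l1dist (avgNbhd ξ
      (fun k => stateLaw P μ0 (G k) (Function.update πs i πd k) s) j) (G j s)
        ≤ 2 / N + (N : ℝ)⁻¹ * ∑ j, d s j := fun s =>
    calc _ ≤ (N : ℝ)⁻¹ * ∑ j, (2 / N + d s j) := by gcongr with j; exact limit_error s j
      _ = 2 / N + (N : ℝ)⁻¹ * ∑ j, d s j :=
        average_const_add _ _
  have concentrates := jointLaw_concentrates hP hL hPLip hμ0 hξ hupdate hG average_error t
  exact (expect_l1dist_empNbhd_le hξ' (jointLaw_mem_simplex hP hμ0 hξ hupdate t) concentrates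
    (G i t) i).trans (add_le_add_right (limit_error t i) _)

/-- The bound on the effect of replacing the `N`-agent system by the limiting one in the
objective of agent `i`, where `d t j` is the error of the limiting neighborhood mean field of
agent `j` at time `t`, and `M` converts neighborhood errors into objective errors. The terms
`2 / N` account for the deviation of agent `i`. -/
noncomputable def objectiveBound (L C M : ℝ) (T : ℕ) (d : ℕ → Fin N → ℝ) (i : Fin N) : ℝ :=
  M * ∑ t ∈ Finset.range T, (C * deviationBound L C N
    (fun s => 2 / N + (N : ℝ)⁻¹ * ∑ j, d s j) t + (2 / N + d t i))

lemma abs_JN_update_sub_Jmf_le (hP : IsKernel P) (hL : 0 ≤ L) (hPLip : KernelLipschitz P L)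
    {r : 𝒳 → 𝒰 → (𝒳 → ℝ) → ℝ} {Lr R : ℝ} (hLr : 0 ≤ Lr) (hr : RewardLipschitz r Lr)
    (hR : 0 ≤ R) (hrR : ∀ x u, ∀ ν ∈ subProb 𝒳, |r x u ν| ≤ R) (hμ0 : μ0 ∈ simplex 𝒳)
    (hξ : ∀ i j, ξ i j ∈ Set.Icc (0 : ℝ) 1) {πs : Fin N → ℕ → 𝒳 → 𝒰 → ℝ}
    (hπs : ∀ i, IsPolicy (πs i)) {G : Fin N → ℕ → 𝒳 → ℝ} (hG : ∀ j t, G j t ∈ subProb 𝒳)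
    {d : ℕ → Fin N → ℝ} (hd : ∀ t j,
      l1dist (avgNbhd ξ (fun k => stateLaw P μ0 (G k) (πs k) t) j) (G j t) ≤ d t j)
    (i : Fin N) {πd : ℕ → 𝒳 → 𝒰 → ℝ} (hπd : IsPolicy πd) (T : ℕ) :
    |JN T r P μ0 ξ (Function.update πs i πd) i - Jmf T r P μ0 (G i) πd|
      ≤ objectiveBound L (Fintype.card 𝒳) (Lr + T * (R * L)) T d i := by
  have bound := abs_JN_sub_Jmf_le hP hL hPLip hr hR hrR hμ0 hξ
    (isPolicy_update hπs i hπd) (hG i) i T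
  rw [Function.update_self] at bound
  refine bound.trans (mul_le_mul_of_nonneg_left (Finset.sum_le_sum fun t _ => ?_) (by positivity))
  exact expect_jointLaw_update_l1dist_le hP hL hPLip hμ0 hξ hπs hG hd i hπd t

end NAgentSystem

lemma tendsto_average_objectiveBound (L C M : ℝ) (T : ℕ) {d : (N : ℕ) → ℕ → Fin N → ℝ}
    (hd : ∀ t, Tendsto (fun N : ℕ => (N : ℝ)⁻¹ * ∑ j, d N t j) atTop (nhds 0)) :
    Tendsto (fun N : ℕ => (N : ℝ)⁻¹ * ∑ i, objectiveBound L C M T (d N) i) atTop (nhds 0) := by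
  have shifted : ∀ t, Tendsto (fun N : ℕ => 2 / (N : ℝ) + (N : ℝ)⁻¹ * ∑ j, d N t j) atTop
      (nhds 0) := fun t => by
    simpa only [add_zero] using
      (tendsto_natCast_atTop_atTop.const_div_atTop (2 : ℝ)).add (hd t)
  have limit := (tendsto_finsetSum (Finset.range T) fun t _ =>
    ((tendsto_deviationBound L C shifted t).const_mul C).add (shifted t)).const_mul M
  simp only [mul_zero, add_zero, Finset.sum_const_zero] at limit
  refine limit.congr' ?_
  filter_upwards [eventually_ne_atTop 0] with N hN
  have : NeZero N := ⟨hN⟩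
  simp only [objectiveBound]
  rw [← Finset.mul_sum, mul_left_comm, Finset.sum_comm, Finset.mul_sum (a := (N : ℝ)⁻¹)]
  simp only [average_const_add]

section Grid

variable {N : ℕ}

/-- The smallest multiple of `1/N` that is at least `β`. -/
noncomputable def gridCeil (N : ℕ) (β : ℝ) : ℝ := ⌈β * N⌉₊ / N

/-- The cell of agent `k` in `(0,1]`, whose right end point is its graphon index `rep N k`. -/
def cell (N : ℕ) (k : Fin N) : Set ℝ := Set.Ioc ((k : ℕ) / N : ℝ) (rep N k)

/-- The step function on `(0,1]` that samples `g` at the graphon indices of the agents,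
extended by `0`. -/
noncomputable def gridSample (N : ℕ) (g : ℝ → ℝ) : ℝ → ℝ :=
  (Set.Ioc 0 1).indicator fun β => g (gridCeil N β)

lemma rep_mem_Ioc (k : Fin N) : rep N k ∈ Set.Ioc (0 : ℝ) 1 := by
  have hN : (0 : ℝ) < N := Nat.cast_pos.2 k.pos
  exact ⟨by rw [rep]; positivity, (div_le_one hN).2 (by exact_mod_cast k.2)⟩

lemma cell_subset_Ioc (k : Fin N) : cell N k ⊆ Set.Ioc 0 1 :=
  Set.Ioc_subset_Ioc (by positivity) (rep_mem_Ioc k).2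

lemma measurable_gridCeil (N : ℕ) : Measurable (gridCeil N) :=
  (measurable_from_top.comp (Nat.measurable_ceil.comp (measurable_id.mul_const _))).div_const _

lemma gridCeil_mem_Ioc [NeZero N] {β : ℝ} (hβ : β ∈ Set.Ioc (0 : ℝ) 1) :
    gridCeil N β ∈ Set.Ioc (0 : ℝ) 1 := by
  have hN : (0 : ℝ) < N := Nat.cast_pos.2 (NeZero.pos N)
  refine ⟨div_pos (Nat.cast_pos.2 (Nat.ceil_pos.2 (mul_pos hβ.1 hN))) hN, (div_le_one hN).2 ?_⟩
  exact_mod_cast Nat.ceil_le.2 (mul_le_of_le_one_left hN.le hβ.2)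

lemma tendsto_gridCeil {β : ℝ} (hβ : β ∈ Set.Ioc (0 : ℝ) 1) :
    Tendsto (fun N => gridCeil N β) atTop (nhdsWithin β (Set.Ioc 0 1)) := by
  refine tendsto_nhdsWithin_iff.2
    ⟨(tendsto_nat_ceil_mul_div_atTop hβ.1.le).comp tendsto_natCast_atTop_atTop, ?_⟩
  filter_upwards [eventually_ne_atTop 0] with N hN
  have : NeZero N := ⟨hN⟩
  exact gridCeil_mem_Ioc hβ

lemma gridCeil_eq_rep {k : Fin N} {β : ℝ} (hβ : β ∈ cell N k) : gridCeil N β = rep N k := by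
  have hN : (0 : ℝ) < N := Nat.cast_pos.2 k.pos
  have ceil_eq : ⌈β * N⌉₊ = (k : ℕ) + 1 := by
    rw [Nat.ceil_eq_iff (by lia), Nat.add_sub_cancel, Nat.cast_add_one]
    exact ⟨(div_lt_iff₀ hN).1 hβ.1, (le_div_iff₀ hN).1 hβ.2⟩
  rw [gridCeil, rep, ceil_eq, Nat.cast_add_one]

lemma eq_of_mem_cell {j k : Fin N} {β : ℝ} (hj : β ∈ cell N j) (hk : β ∈ cell N k) : j = k := by
  have hN : (N : ℝ) ≠ 0 := Nat.cast_ne_zero.2 j.pos.ne'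
  have rep_eq : rep N j = rep N k := (gridCeil_eq_rep hj).symm.trans (gridCeil_eq_rep hk)
  rw [rep, rep, div_left_inj' hN, add_left_inj, Nat.cast_inj] at rep_eq
  exact Fin.ext rep_eq

lemma integral_eq_average_of_eq_on_cell [NeZero N] {F : ℝ → ℝ} {v : Fin N → ℝ}
    (h : ∀ k, ∀ β ∈ cell N k, F β = v k) :
    ∫ β in Set.Ioc (0 : ℝ) 1, F β = (N : ℝ)⁻¹ * ∑ k, v k := by
  have node_le : ∀ k : ℕ, (k / N : ℝ) ≤ (k + 1 : ℕ) / N := fun k => by gcongr; exact k.le_succ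
  have eqOn : ∀ k : Fin N,
      Set.EqOn F (fun _ => v k) (Set.Ioc ((k : ℕ) / N : ℝ) (((k : ℕ) + 1 : ℕ) / N)) :=
    fun k β hβ => h k β (by simpa only [cell, rep, Nat.cast_add_one] using hβ)
  have integrable : ∀ k < N, IntervalIntegrable F volume (k / N) ((k + 1 : ℕ) / N) := fun k hk =>
    (intervalIntegrable_iff_integrableOn_Ioc_of_le (node_le k)).2 <|
      (integrableOn_const (by simp)).congr_fun (eqOn ⟨k, hk⟩).symm measurableSet_Ioc
  have split := intervalIntegral.sum_integral_adjacent_intervals integrable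
  rw [Nat.cast_zero, zero_div, div_self (NeZero.ne (N : ℝ))] at split
  rw [← intervalIntegral.integral_of_le zero_le_one, ← split, Finset.sum_range, Finset.mul_sum]
  refine Finset.sum_congr rfl fun k _ => ?_
  rw [intervalIntegral.integral_of_le (node_le k), setIntegral_congr_fun measurableSet_Ioc (eqOn k),
    setIntegral_const, Real.volume_real_Ioc_of_le (node_le k), ← sub_div, Nat.cast_add_one,
    add_sub_cancel_left, one_div, smul_eq_mul]

lemma gridSample_of_mem (N : ℕ) (g : ℝ → ℝ) {β : ℝ} (hβ : β ∈ Set.Ioc (0 : ℝ) 1) :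
    gridSample N g β = g (gridCeil N β) :=
  Set.indicator_of_mem hβ _

lemma gridSample_of_mem_cell (g : ℝ → ℝ) {k : Fin N} {β : ℝ} (hβ : β ∈ cell N k) :
    gridSample N g β = g (rep N k) := by
  rw [gridSample_of_mem N g (cell_subset_Ioc k hβ), gridCeil_eq_rep hβ]

lemma measurable_gridSample (N : ℕ) {g : ℝ → ℝ} (hg : Measurable g) :
    Measurable (gridSample N g) :=
  (hg.comp (measurable_gridCeil N)).indicator measurableSet_Ioc

lemma abs_gridSample_le [NeZero N] {g : ℝ → ℝ} {c : ℝ} (hc : 0 ≤ c)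
    (hg : ∀ β ∈ Set.Ioc (0 : ℝ) 1, |g β| ≤ c) (β : ℝ) : |gridSample N g β| ≤ c := by
  by_cases hβ : β ∈ Set.Ioc (0 : ℝ) 1
  · rw [gridSample_of_mem N g hβ]
    exact hg _ (gridCeil_mem_Ioc hβ)
  · rwa [gridSample, Set.indicator_of_notMem hβ, abs_zero]

lemma stepGraphon_of_mem_cell (ξ : Fin N → Fin N → ℝ) {α β : ℝ} {j k : Fin N}
    (hα : α ∈ cell N j) (hβ : β ∈ cell N k) : stepGraphon ξ α β = ξ j k := by
  have mem_iff : ∀ {γ : ℝ} {l : Fin N}, γ ∈ cell N l → ∀ i : Fin N,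
      ((i : ℕ) / N : ℝ) < γ ∧ γ ≤ ((i : ℕ) + 1) / N ↔ i = l := fun hγ i =>
    ⟨fun hi => eq_of_mem_cell hi hγ, fun hi => hi ▸ hγ⟩
  simp only [stepGraphon, mem_iff hα, mem_iff hβ, mul_ite, mul_one, mul_zero, ite_mul, one_mul,
    zero_mul, Finset.sum_ite_eq', Finset.mem_univ, if_true]

lemma measurable_stepGraphon (ξ : Fin N → Fin N → ℝ) :
    Measurable (Function.uncurry (stepGraphon ξ)) := by
  unfold stepGraphon Function.uncurry
  refine Finset.measurable_sum _ fun i _ => Finset.measurable_sum _ fun j _ => ?_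
  exact ((Measurable.ite (measurable_fst measurableSet_Ioc) measurable_const measurable_const).mul
    (Measurable.ite (measurable_snd measurableSet_Ioc) measurable_const
      measurable_const)).mul_const _

lemma abs_stepGraphon_le {ξ : Fin N → Fin N → ℝ} (hξ : ∀ i j, |ξ i j| ≤ 1) (α β : ℝ) :
    |stepGraphon ξ α β| ≤ N * N := by
  calc |stepGraphon ξ α β| ≤ ∑ _i : Fin N, ∑ _j : Fin N, (1 : ℝ) :=
        (Finset.abs_sum_le_sum_abs _ _).trans <| Finset.sum_le_sum fun i _ =>
          (Finset.abs_sum_le_sum_abs _ _).trans <| Finset.sum_le_sum fun j _ => by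
            split_ifs <;> simp [hξ i j]
    _ = N * N := by simp

end Grid

section GraphonOperator

/-- The functions that are almost everywhere continuous on `(0,1]`. -/
def AEContinuous (g : ℝ → ℝ) : Prop :=
  ∀ᵐ α ∂volume.restrict (Set.Ioc (0 : ℝ) 1), ContinuousWithinAt g (Set.Ioc 0 1) α

/-- The graphons whose value at a.e. `(α, β)` depends continuously on `α`. -/
def AEContinuousLeft (W : ℝ → ℝ → ℝ) : Prop :=
  ∀ᵐ α ∂volume.restrict (Set.Ioc (0 : ℝ) 1), ∀ᵐ β ∂volume.restrict (Set.Ioc (0 : ℝ) 1),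
    ContinuousWithinAt (fun a => W a β) (Set.Ioc 0 1) α

/-- The integral operator of a graphon, in terms of which `nbhd W ν α x` is
`graphonOp W (fun β => ν β x) α`. -/
noncomputable def graphonOp (W : ℝ → ℝ → ℝ) (g : ℝ → ℝ) (α : ℝ) : ℝ :=
  ∫ β in Set.Ioc (0 : ℝ) 1, W α β * g β

lemma integrableOn_Ioc_of_abs_le {f : ℝ → ℝ} (hf : Measurable f) {c : ℝ}
    (hc : ∀ β ∈ Set.Ioc (0 : ℝ) 1, |f β| ≤ c) : IntegrableOn f (Set.Ioc 0 1) :=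
  Measure.integrableOn_of_bounded (by simp) hf.aestronglyMeasurable
    ((ae_restrict_iff' measurableSet_Ioc).2 (Eventually.of_forall hc))

lemma tendsto_integral_abs_gridSample_sub {g : ℝ → ℝ} (hg : Measurable g) {c : ℝ}
    (hgc : ∀ β ∈ Set.Ioc (0 : ℝ) 1, |g β| ≤ c) (hcont : AEContinuous g) :
    Tendsto (fun N => ∫ β in Set.Ioc (0 : ℝ) 1, |gridSample N g β - g β|) atTop (nhds 0) := by
  have hc : 0 ≤ c := (abs_nonneg _).trans (hgc 1 (by simp))
  suffices Tendsto (fun N => ∫ β in Set.Ioc (0 : ℝ) 1, |gridSample N g β - g β|) atTop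
      (nhds (∫ _ in Set.Ioc (0 : ℝ) 1, (0 : ℝ))) by simpa only [integral_zero] using this
  refine tendsto_integral_filter_of_dominated_convergence (fun _ => c + c)
    (Eventually.of_forall fun N =>
      ((measurable_gridSample N hg).sub hg).abs.aestronglyMeasurable) ?_ ?_ ?_
  · filter_upwards [eventually_ne_atTop 0] with N hN
    have : NeZero N := ⟨hN⟩
    filter_upwards [ae_restrict_mem measurableSet_Ioc] with β hβ
    rw [Real.norm_eq_abs, abs_abs]
    exact (abs_sub _ _).trans (add_le_add (abs_gridSample_le hc hgc β) (hgc β hβ))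
  · exact integrable_const _
  · filter_upwards [hcont, ae_restrict_mem measurableSet_Ioc] with β hcontβ hβ
    simp only [gridSample_of_mem _ g hβ]
    simpa only [sub_self, abs_zero, Function.comp_def] using
      ((hcontβ.tendsto.comp (tendsto_gridCeil hβ)).sub_const (g β)).abs

lemma measurable_graphonOp {W : ℝ → ℝ → ℝ} (hW : Measurable (Function.uncurry W)) {g : ℝ → ℝ}
    (hg : Measurable g) : Measurable (graphonOp W g) :=
  have integrand : Measurable (Function.uncurry fun α β => W α β * g β) :=
    hW.mul (hg.comp measurable_snd)
  (integrand.stronglyMeasurable.integral_prod_right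
    (ν := volume.restrict (Set.Ioc (0 : ℝ) 1))).measurable

lemma measurable_mul_of_uncurry {W : ℝ → ℝ → ℝ} (hW : Measurable (Function.uncurry W))
    {g : ℝ → ℝ} (hg : Measurable g) (α : ℝ) : Measurable fun β => W α β * g β :=
  (hW.comp measurable_prodMk_left).mul hg

lemma abs_mul_le_of_abs_le {a b c : ℝ} (ha : |a| ≤ c) (hb : |b| ≤ 1) : |a * b| ≤ c := by
  rw [abs_mul]
  exact (mul_le_of_le_one_right (abs_nonneg a) hb).trans ha

lemma integrableOn_graphon_mul {W : ℝ → ℝ → ℝ} (hW : Measurable (Function.uncurry W)) {c : ℝ}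
    (hWc : ∀ α β, |W α β| ≤ c) {g : ℝ → ℝ} (hg : Measurable g)
    (hg1 : ∀ β ∈ Set.Ioc (0 : ℝ) 1, |g β| ≤ 1) (α : ℝ) :
    IntegrableOn (fun β => W α β * g β) (Set.Ioc 0 1) :=
  integrableOn_Ioc_of_abs_le (measurable_mul_of_uncurry hW hg α) fun β hβ =>
    abs_mul_le_of_abs_le (hWc α β) (hg1 β hβ)

lemma abs_graphonOp_le {W : ℝ → ℝ → ℝ} {c : ℝ} (hWc : ∀ α β, |W α β| ≤ c) {g : ℝ → ℝ}
    (hg1 : ∀ β ∈ Set.Ioc (0 : ℝ) 1, |g β| ≤ 1) (α : ℝ) : |graphonOp W g α| ≤ c := by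
  simpa [graphonOp] using norm_setIntegral_le_of_norm_le_const (μ := volume)
    (s := Set.Ioc (0 : ℝ) 1) (f := fun β => W α β * g β) (by simp) fun β hβ =>
      abs_mul_le_of_abs_le (hWc α β) (hg1 β hβ)

lemma AEContinuousLeft.aeContinuous_graphonOp {W : ℝ → ℝ → ℝ} (hWcont : AEContinuousLeft W)
    (hW : Measurable (Function.uncurry W)) {c : ℝ} (hWc : ∀ α β, |W α β| ≤ c) {g : ℝ → ℝ}
    (hg : Measurable g) (hg1 : ∀ β ∈ Set.Ioc (0 : ℝ) 1, |g β| ≤ 1) :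
    AEContinuous (graphonOp W g) := by
  filter_upwards [hWcont] with α hα
  refine continuousWithinAt_of_dominated (bound := fun _ => c)
    (Eventually.of_forall fun a => (measurable_mul_of_uncurry hW hg a).aestronglyMeasurable)
    (Eventually.of_forall fun a => ?_) (integrable_const _) ?_
  · filter_upwards [ae_restrict_mem measurableSet_Ioc] with β hβ
    exact abs_mul_le_of_abs_le (hWc a β) (hg1 β hβ)
  · filter_upwards [hα] with β hβ
    exact hβ.mul continuousWithinAt_const

lemma OpConvergesTo.tendsto_integral_abs {WN : ℕ → ℝ → ℝ → ℝ} {W : ℝ → ℝ → ℝ}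
    (h : OpConvergesTo WN W) {g : ℕ → ℝ → ℝ} (hg : ∀ N, Measurable (g N))
    (hg1 : ∀ᶠ N in atTop, ∀ β, |g N β| ≤ 1) :
    Tendsto
      (fun N => ∫ α in Set.Ioc (0 : ℝ) 1, |graphonOp (fun a b => WN N a b - W a b) (g N) α|)
      atTop (nhds 0) := by
  refine tendsto_order.2 ⟨fun a ha => Eventually.of_forall fun N =>
    ha.trans_le (integral_nonneg fun _ => abs_nonneg _), fun a ha => ?_⟩
  obtain ⟨N₀, hN₀⟩ := h (a / 2) (half_pos ha)
  filter_upwards [hg1, eventually_ge_atTop N₀] with N hgN hN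
  exact (hN₀ N hN (g N) (hg N) hgN).trans_lt (half_lt_self ha)

lemma integrableOn_abs_gridSample_sub {N : ℕ} [NeZero N] {g : ℝ → ℝ} (hg : Measurable g) {c : ℝ}
    (hgc : ∀ β ∈ Set.Ioc (0 : ℝ) 1, |g β| ≤ c) :
    IntegrableOn (fun β => |gridSample N g β - g β|) (Set.Ioc 0 1) :=
  have hc : 0 ≤ c := (abs_nonneg _).trans (hgc 1 (by simp))
  integrableOn_Ioc_of_abs_le ((measurable_gridSample N hg).sub hg).abs fun β hβ =>
    (abs_abs _).trans_le <| (abs_sub _ _).trans <|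
      add_le_add (abs_gridSample_le hc hgc β) (hgc β hβ)

lemma graphonOp_sub_graphon {V W : ℝ → ℝ → ℝ} {g : ℝ → ℝ} {α : ℝ}
    (hV : IntegrableOn (fun β => V α β * g β) (Set.Ioc 0 1))
    (hW : IntegrableOn (fun β => W α β * g β) (Set.Ioc 0 1)) :
    graphonOp (fun a b => V a b - W a b) g α = graphonOp V g α - graphonOp W g α := by
  simp only [graphonOp, sub_mul]
  exact integral_sub hV hW

lemma abs_graphonOp_sub_le {W : ℝ → ℝ → ℝ} (hW1 : ∀ α β, |W α β| ≤ 1) {f g : ℝ → ℝ} {α : ℝ}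
    (hf : IntegrableOn (fun β => W α β * f β) (Set.Ioc 0 1))
    (hg : IntegrableOn (fun β => W α β * g β) (Set.Ioc 0 1))
    (hfg : IntegrableOn (fun β => |f β - g β|) (Set.Ioc 0 1)) :
    |graphonOp W f α - graphonOp W g α| ≤ ∫ β in Set.Ioc (0 : ℝ) 1, |f β - g β| := by
  rw [graphonOp, graphonOp, ← integral_sub hf hg]
  refine abs_integral_le_integral_abs.trans <| integral_mono (hf.sub hg).abs hfg fun β => ?_
  simp only [← mul_sub, abs_mul]
  exact mul_le_of_le_one_left (abs_nonneg _) (hW1 α β)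

lemma graphonOp_stepGraphon_gridSample {N : ℕ} [NeZero N] (ξ : Fin N → Fin N → ℝ) (g : ℝ → ℝ)
    {j : Fin N} {α : ℝ} (hα : α ∈ cell N j) :
    graphonOp (stepGraphon ξ) (gridSample N g) α = (N : ℝ)⁻¹ * ∑ k, ξ j k * g (rep N k) :=
  integral_eq_average_of_eq_on_cell fun _ _ hβ => by
    rw [stepGraphon_of_mem_cell ξ hα hβ, gridSample_of_mem_cell g hβ]

lemma average_abs_sub_graphonOp_le {N : ℕ} [NeZero N] {ξ : Fin N → Fin N → ℝ}
    (hξ : ∀ i j, |ξ i j| ≤ 1) {W : ℝ → ℝ → ℝ} (hW : Measurable (Function.uncurry W))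
    (hW1 : ∀ α β, |W α β| ≤ 1) {g : ℝ → ℝ} (hg : Measurable g)
    (hg1 : ∀ β ∈ Set.Ioc (0 : ℝ) 1, |g β| ≤ 1) :
    (N : ℝ)⁻¹ * ∑ j, |(N : ℝ)⁻¹ * ∑ k, ξ j k * g (rep N k) - graphonOp W g (rep N j)| ≤
      (∫ α in Set.Ioc (0 : ℝ) 1,
          |graphonOp (fun a b => stepGraphon ξ a b - W a b) (gridSample N g) α|)
        + (∫ β in Set.Ioc (0 : ℝ) 1, |gridSample N g β - g β|)
        + ∫ α in Set.Ioc (0 : ℝ) 1, |gridSample N (graphonOp W g) α - graphonOp W g α| := by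
  have hgN : Measurable (gridSample N g) := measurable_gridSample N hg
  have hgN1 : ∀ β ∈ Set.Ioc (0 : ℝ) 1, |gridSample N g β| ≤ 1 := fun β _ =>
    abs_gridSample_le zero_le_one hg1 β
  have hdiff : Measurable (Function.uncurry fun a b => stepGraphon ξ a b - W a b) :=
    (measurable_stepGraphon ξ).sub hW
  have integrable_op : IntegrableOn (fun α =>
      |graphonOp (fun a b => stepGraphon ξ a b - W a b) (gridSample N g) α|) (Set.Ioc 0 1) :=
    integrableOn_Ioc_of_abs_le
      (measurable_graphonOp hdiff hgN).abs fun α _ =>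
        (abs_abs _).trans_le <| abs_graphonOp_le (fun a b => (abs_sub _ _).trans
          (add_le_add (abs_stepGraphon_le hξ a b) (hW1 a b))) hgN1 α
  have integrable_sum := integrable_op.add
    (integrable_const (∫ β in Set.Ioc (0 : ℝ) 1, |gridSample N g β - g β|))
  have integrable_sample : IntegrableOn
      (fun α => |gridSample N (graphonOp W g) α - graphonOp W g α|) (Set.Ioc 0 1) :=
    integrableOn_abs_gridSample_sub (measurable_graphonOp hW hg) fun α _ =>
      abs_graphonOp_le hW1 hg1 α
  have discretize : ∀ j, ∀ α ∈ cell N j,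
      |graphonOp (stepGraphon ξ) (gridSample N g) α - gridSample N (graphonOp W g) α|
        = |(N : ℝ)⁻¹ * ∑ k, ξ j k * g (rep N k) - graphonOp W g (rep N j)| := fun j α hα => by
    rw [gridSample_of_mem_cell _ hα, graphonOp_stepGraphon_gridSample ξ g hα]
  rw [← integral_eq_average_of_eq_on_cell discretize]
  refine (integral_mono_of_nonneg (Eventually.of_forall fun _ => abs_nonneg _)
    (integrable_sum.add integrable_sample) (Eventually.of_forall fun α => ?_)).trans_eq ?_
  · have hWgN := integrableOn_graphon_mul hW hW1 hgN hgN1 α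
    have graphon_error := graphonOp_sub_graphon
      (integrableOn_graphon_mul (measurable_stepGraphon ξ) (abs_stepGraphon_le hξ) hgN hgN1 α) hWgN
    have sampling_error := abs_graphonOp_sub_le hW1 hWgN
      (integrableOn_graphon_mul hW hW1 hg hg1 α) (integrableOn_abs_gridSample_sub hg hg1)
    simp only [Pi.add_apply, graphon_error]
    linarith [abs_sub_le (graphonOp (stepGraphon ξ) (gridSample N g) α)
        (graphonOp W (gridSample N g) α) (gridSample N (graphonOp W g) α),
      abs_sub_le (graphonOp W (gridSample N g) α) (graphonOp W g α)
        (gridSample N (graphonOp W g) α),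
      abs_sub_comm (graphonOp W g α) (gridSample N (graphonOp W g) α)]
  · rw [integral_add' integrable_sum integrable_sample,
      integral_add' integrable_op (integrable_const _)]
    simp

lemma tendsto_average_abs_sub_graphonOp {ξ : (N : ℕ) → Fin N → Fin N → ℝ}
    (hξ : ∀ N i j, |ξ N i j| ≤ 1) {W : ℝ → ℝ → ℝ} (hW : Measurable (Function.uncurry W))
    (hW1 : ∀ α β, |W α β| ≤ 1) (hWcont : AEContinuousLeft W)
    (hconv : OpConvergesTo (fun N => stepGraphon (ξ N)) W) {g : ℝ → ℝ} (hg : Measurable g)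
    (hg1 : ∀ β ∈ Set.Ioc (0 : ℝ) 1, |g β| ≤ 1) (hgcont : AEContinuous g) :
    Tendsto (fun N : ℕ => (N : ℝ)⁻¹ * ∑ j,
      |(N : ℝ)⁻¹ * ∑ k, ξ N j k * g (rep N k) - graphonOp W g (rep N j)|) atTop (nhds 0) := by
  have op_error := hconv.tendsto_integral_abs (g := fun N => gridSample N g)
    (fun N => measurable_gridSample N hg) <| by
      filter_upwards [eventually_ne_atTop 0] with N hN
      have : NeZero N := ⟨hN⟩
      exact abs_gridSample_le zero_le_one hg1
  have total_error := (op_error.add (tendsto_integral_abs_gridSample_sub hg hg1 hgcont)).add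
    (tendsto_integral_abs_gridSample_sub (measurable_graphonOp hW hg)
      (fun α _ => abs_graphonOp_le hW1 hg1 α) (hWcont.aeContinuous_graphonOp hW hW1 hg hg1))
  rw [add_zero, add_zero] at total_error
  refine squeeze_zero' (Eventually.of_forall fun N => by positivity) ?_ total_error
  filter_upwards [eventually_ne_atTop 0] with N hN
  have : NeZero N := ⟨hN⟩
  exact average_abs_sub_graphonOp_le (hξ N) hW hW1 hg hg1

end GraphonOperator

section MeanField

variable [Fintype 𝒳] [Fintype 𝒰] {P : 𝒳 → 𝒰 → (𝒳 → ℝ) → 𝒳 → ℝ} {L : ℝ} {W : ℝ → ℝ → ℝ}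

lemma KernelLipschitz.abs (hP : KernelLipschitz P L) : KernelLipschitz P |L| :=
  fun x u ν ν' hν hν' => (hP x u ν ν' hν hν').trans
    (mul_le_mul_of_nonneg_right (le_abs_self L) (l1dist_nonneg ν ν'))

lemma RewardLipschitz.abs {r : 𝒳 → 𝒰 → (𝒳 → ℝ) → ℝ} (hr : RewardLipschitz r L) :
    RewardLipschitz r |L| :=
  fun x u ν ν' hν hν' => (hr x u ν ν' hν hν').trans
    (mul_le_mul_of_nonneg_right (le_abs_self L) (l1dist_nonneg ν ν'))

lemma continuous_l1dist_left (ν' : 𝒳 → ℝ) : Continuous fun ν => l1dist ν ν' := by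
  unfold l1dist
  fun_prop

lemma KernelLipschitz.continuousOn (hP : KernelLipschitz P L) (x : 𝒳) (u : 𝒰) (y : 𝒳) :
    ContinuousOn (fun ν => P x u ν y) (subProb 𝒳) := by
  intro ν' hν'
  have bound_tendsto : Tendsto (fun ν => L * l1dist ν ν') (nhdsWithin ν' (subProb 𝒳)) (nhds 0) :=
    by simpa only [l1dist_self, mul_zero] using
      (((continuous_l1dist_left ν').tendsto ν').const_mul L).mono_left nhdsWithin_le_nhds
  refine tendsto_iff_dist_tendsto_zero.2 <|
    squeeze_zero' (Eventually.of_forall fun _ => dist_nonneg) ?_ bound_tendsto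
  filter_upwards [self_mem_nhdsWithin] with ν hν
  exact (abs_sub_le_l1dist _ _ y).trans (hP x u ν ν' hν hν')

lemma nbhd_mem_subProb (hW : Measurable (Function.uncurry W))
    (hW01 : ∀ α β, W α β ∈ Set.Icc (0 : ℝ) 1) {ν : ℝ → 𝒳 → ℝ}
    (hν : ∀ x, Measurable fun β => ν β x) (hν1 : ∀ β ∈ Set.Ioc (0 : ℝ) 1, ν β ∈ simplex 𝒳)
    (α : ℝ) : nbhd W ν α ∈ subProb 𝒳 := by
  have hW1 := fun α β => abs_le_one_of_mem_Icc (hW01 α β)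
  refine ⟨fun x => setIntegral_nonneg measurableSet_Ioc fun β hβ =>
    mul_nonneg (hW01 α β).1 ((hν1 β hβ).1 x), ?_⟩
  calc ∑ x, nbhd W ν α x = ∫ β in Set.Ioc (0 : ℝ) 1, ∑ x, W α β * ν β x :=
        (integral_finsetSum _ fun x _ => integrableOn_graphon_mul hW hW1 (hν x)
          (fun β hβ => abs_le_one_of_mem_Icc (mem_Icc_of_mem_simplex (hν1 β hβ) x)) α).symm
    _ = graphonOp W (fun _ => 1) α := setIntegral_congr_fun measurableSet_Ioc fun β hβ => by
        simp only [← Finset.mul_sum, (hν1 β hβ).2]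
    _ ≤ 1 := (le_abs_self _).trans (abs_graphonOp_le hW1 (fun _ _ => abs_one.le) α)

variable {μ0 : 𝒳 → ℝ} {πe : ℝ → ℕ → 𝒳 → 𝒰 → ℝ} {μ : ℕ → ℝ → 𝒳 → ℝ}

lemma IsMeanFieldOf.apply_succ (hμ : IsMeanFieldOf W P μ0 πe μ) (t : ℕ) {α : ℝ}
    (hα : α ∈ Set.Ioc (0 : ℝ) 1) :
    μ (t + 1) α = mixture (μ t α) (stepLaw P (πe α t) (nbhd W (μ t) α)) :=
  funext (hμ.2.2 t α (Set.Ioc_subset_Icc_self hα))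

lemma IsMeanFieldOf.stateLaw_eq (hμ : IsMeanFieldOf W P μ0 πe μ) {α : ℝ}
    (hα : α ∈ Set.Ioc (0 : ℝ) 1) (t : ℕ) :
    stateLaw P μ0 (fun s => nbhd W (μ s) α) (πe α) t = μ t α := by
  induction t with
  | zero => exact (hμ.2.1 α (Set.Ioc_subset_Icc_self hα)).symm
  | succ t ih => rw [stateLaw_succ, ih, hμ.apply_succ t hα]

lemma IsMeanFieldOf.mem_simplex (hμ : IsMeanFieldOf W P μ0 πe μ)
    (hW : Measurable (Function.uncurry W)) (hW01 : ∀ α β, W α β ∈ Set.Icc (0 : ℝ) 1)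
    (hP : IsKernel P) (hμ0 : μ0 ∈ simplex 𝒳)
    (hπe : ∀ α ∈ Set.Ioc (0 : ℝ) 1, IsPolicy (πe α)) (t : ℕ) :
    ∀ α ∈ Set.Ioc (0 : ℝ) 1, μ t α ∈ simplex 𝒳 := by
  induction t with
  | zero => exact fun α hα => by rwa [hμ.2.1 α (Set.Ioc_subset_Icc_self hα)]
  | succ t ih =>
    intro α hα
    rw [hμ.apply_succ t hα]
    exact mixture_mem_simplex (ih α hα)
      (stepLaw_mem_simplex hP (hπe α hα t) (nbhd_mem_subProb hW hW01 (hμ.1 t) ih α))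

lemma IsMeanFieldOf.aeContinuous (hμ : IsMeanFieldOf W P μ0 πe μ)
    (hW : Measurable (Function.uncurry W)) (hW01 : ∀ α β, W α β ∈ Set.Icc (0 : ℝ) 1)
    (hWcont : AEContinuousLeft W) (hP : IsKernel P) (hPLip : KernelLipschitz P L)
    (hμ0 : μ0 ∈ simplex 𝒳) (hπe : ∀ α ∈ Set.Ioc (0 : ℝ) 1, IsPolicy (πe α))
    (hπcont : ∀ t x u, AEContinuous fun α => πe α t x u) (t : ℕ) :
    ∀ x, AEContinuous fun α => μ t α x := by
  have hW1 := fun α β => abs_le_one_of_mem_Icc (hW01 α β)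
  induction t with
  | zero =>
    intro x
    filter_upwards [ae_restrict_mem measurableSet_Ioc] with α hα
    have constant : ∀ a ∈ Set.Ioc (0 : ℝ) 1, μ 0 a x = μ0 x := fun a ha => by
      rw [hμ.2.1 a (Set.Ioc_subset_Icc_self ha)]
    exact continuousWithinAt_const.congr constant (constant α hα)
  | succ t ih =>
    intro y
    have hmem := hμ.mem_simplex hW hW01 hP hμ0 hπe t
    have nbhd_cont : ∀ x, AEContinuous fun α => nbhd W (μ t) α x := fun x =>
      hWcont.aeContinuous_graphonOp hW hW1 (hμ.1 t x)
        fun β hβ => abs_le_one_of_mem_Icc (mem_Icc_of_mem_simplex (hmem β hβ) x)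
    filter_upwards [ae_all_iff.2 ih, ae_all_iff.2 nbhd_cont,
      ae_all_iff.2 fun x => ae_all_iff.2 fun u => hπcont t x u,
      ae_restrict_mem measurableSet_Ioc] with α hμα hGα hπα hα
    have hG := nbhd_mem_subProb hW hW01 (hμ.1 t) hmem
    have kernel_cont : ∀ x u,
        ContinuousWithinAt (fun a => P x u (nbhd W (μ t) a) y) (Set.Ioc 0 1) α := fun x u =>
      (hPLip.continuousOn x u y _ (hG α)).comp (continuousWithinAt_pi.2 hGα) fun a _ => hG a
    have step : ∀ a ∈ Set.Ioc (0 : ℝ) 1,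
        μ (t + 1) a y = ∑ x, μ t a x * ∑ u, πe a t x u * P x u (nbhd W (μ t) a) y :=
      fun a ha => hμ.2.2 t a (Set.Ioc_subset_Icc_self ha) y
    refine ContinuousWithinAt.congr ?_ step (step α hα)
    exact tendsto_finsetSum _ fun x _ => (hμα x).mul <|
      tendsto_finsetSum _ fun u _ => (hπα x u).mul (kernel_cont x u)

/-- The error that agent `j` makes in the limit when its neighborhood mean field under `ν` is
computed from the `N` agents rather than from the graphon. -/
noncomputable def nbhdError (W : ℝ → ℝ → ℝ) {N : ℕ} (ξ : Fin N → Fin N → ℝ) (ν : ℝ → 𝒳 → ℝ)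
    (j : Fin N) : ℝ :=
  l1dist (avgNbhd ξ (fun k => ν (rep N k)) j) (nbhd W ν (rep N j))

lemma tendsto_average_nbhdError {ξ : (N : ℕ) → Fin N → Fin N → ℝ} (hξ : ∀ N i j, |ξ N i j| ≤ 1)
    (hW : Measurable (Function.uncurry W)) (hW1 : ∀ α β, |W α β| ≤ 1)
    (hWcont : AEContinuousLeft W) (hconv : OpConvergesTo (fun N => stepGraphon (ξ N)) W)
    {ν : ℝ → 𝒳 → ℝ} (hν : ∀ x, Measurable fun β => ν β x)
    (hν1 : ∀ x, ∀ β ∈ Set.Ioc (0 : ℝ) 1, |ν β x| ≤ 1)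
    (hνcont : ∀ x, AEContinuous fun β => ν β x) :
    Tendsto (fun N : ℕ => (N : ℝ)⁻¹ * ∑ j, nbhdError W (ξ N) ν j) atTop (nhds 0) := by
  have limit := tendsto_finsetSum Finset.univ fun x _ =>
    tendsto_average_abs_sub_graphonOp hξ hW hW1 hWcont hconv (hν x) (hν1 x) (hνcont x)
  simp only [Finset.sum_const_zero, ← Finset.mul_sum] at limit
  refine limit.congr fun N => ?_
  rw [Finset.sum_comm]
  rfl

end MeanField

lemma EnsembleLipschitzUpTo.aeContinuous [Fintype 𝒳] [Fintype 𝒰] {πe : ℝ → ℕ → 𝒳 → 𝒰 → ℝ}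
    (h : EnsembleLipschitzUpTo πe) (t : ℕ) (x : 𝒳) (u : 𝒰) :
    AEContinuous fun α => πe α t x u := by
  obtain ⟨L, D, hD⟩ := h
  have notMem : ∀ᵐ α ∂volume.restrict (Set.Ioc (0 : ℝ) 1), α ∉ (D : Set ℝ) :=
    ae_restrict_of_ae (measure_eq_zero_iff_ae_notMem.1 (D.finite_toSet.measure_zero volume))
  filter_upwards [notMem, ae_restrict_mem measurableSet_Ioc] with α hαD hα
  obtain ⟨δ, hδ, hball⟩ := Metric.mem_nhds_iff.1 (D.finite_toSet.isClosed.isOpen_compl.mem_nhds hαD)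
  have bound_tendsto : Tendsto (fun a => L * |a - α|) (nhdsWithin α (Set.Ioc 0 1)) (nhds 0) := by
    have : Continuous fun a => L * |a - α| := by fun_prop
    simpa using (this.tendsto α).mono_left nhdsWithin_le_nhds
  refine tendsto_iff_dist_tendsto_zero.2 <|
    squeeze_zero' (Eventually.of_forall fun _ => dist_nonneg) ?_ bound_tendsto
  filter_upwards [self_mem_nhdsWithin, mem_nhdsWithin_of_mem_nhds (Metric.ball_mem_nhds α hδ)]
    with a ha haδ
  refine hD t x u a (Set.Ioc_subset_Icc_self ha) α (Set.Ioc_subset_Icc_self hα) fun d hd hda => ?_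
  have uIcc_subset : Set.uIcc a α ⊆ Metric.ball α δ := by
    rw [← segment_eq_uIcc]
    exact (convex_ball α δ).segment_subset haδ (Metric.mem_ball_self hδ)
  exact hball (uIcc_subset hda) hd

lemma GraphonLipschitz.aeContinuousLeft {W : ℝ → ℝ → ℝ} {L : ℝ} (h : GraphonLipschitz W L) :
    AEContinuousLeft W := by
  filter_upwards [ae_restrict_mem measurableSet_Ioc] with α hα
  filter_upwards [ae_restrict_mem measurableSet_Ioc] with β hβ
  have hβ' := Set.Ioc_subset_Icc_self hβ
  have lipschitz : LipschitzOnWith L.toNNReal (fun a => W a β) (Set.Ioc 0 1) :=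
    LipschitzOnWith.of_dist_le' fun a ha a' ha' => by
      simpa only [Real.dist_eq, sub_self, abs_zero, add_zero] using
        h a β a' β (Set.Ioc_subset_Icc_self ha) hβ' (Set.Ioc_subset_Icc_self ha') hβ'
  exact lipschitz.continuousOn α hα

lemma eventually_exists_card_le_forall_lt {S : (N : ℕ) → Fin N → ℝ} (hS : ∀ N i, 0 ≤ S N i)
    (hlim : Tendsto (fun N : ℕ => (N : ℝ)⁻¹ * ∑ i, S N i) atTop (nhds 0)) {ε p : ℝ} (hε : 0 < ε)
    (hp : 0 < p) : ∀ᶠ N : ℕ in atTop, ∃ s : Finset (Fin N),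
      ⌊(1 - p) * (N : ℝ)⌋ ≤ (s.card : ℤ) ∧ ∀ i ∈ s, S N i < ε := by
  filter_upwards [hlim.eventually_lt_const (mul_pos hp hε), eventually_gt_atTop 0] with N hN hN0
  refine ⟨Finset.univ.filter fun i => S N i < ε, ?_, fun i hi => (Finset.mem_filter.1 hi).2⟩
  set good := Finset.univ.filter fun i => S N i < ε
  set bad := Finset.univ.filter fun i => ¬ S N i < ε
  have card_add : (good.card + bad.card : ℝ) = N := by
    exact_mod_cast (Finset.card_filter_add_card_filter_not _).trans (Finset.card_fin N)
  have markov : bad.card * ε ≤ ∑ i, S N i := by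
    rw [← nsmul_eq_mul]
    exact (bad.card_nsmul_le_sum (S N) ε fun i hi => not_lt.1 (Finset.mem_filter.1 hi).2).trans
      (Finset.sum_le_sum_of_subset_of_nonneg (Finset.subset_univ _) fun i _ _ => hS N i)
  have sum_lt : ∑ i, S N i < N * (p * ε) := (inv_mul_lt_iff₀ (Nat.cast_pos.2 hN0)).1 hN
  have card_bad : (bad.card : ℝ) ≤ p * N :=
    le_of_mul_le_mul_right (by linarith [markov, sum_lt]) hε
  refine Int.floor_le_iff.2 ?_
  push_cast
  linarith

theorem objective_convergence_general
    {𝒳 𝒰 : Type*} [Fintype 𝒳] [DecidableEq 𝒳] [Fintype 𝒰]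
    (T : ℕ) (μ0 : 𝒳 → ℝ) (hμ0 : μ0 ∈ simplex 𝒳)
    (P : 𝒳 → 𝒰 → (𝒳 → ℝ) → 𝒳 → ℝ) (hP : IsKernel P)
    (r : 𝒳 → 𝒰 → (𝒳 → ℝ) → ℝ)
    (Lr LP : ℝ) (hrLip : RewardLipschitz r Lr) (hPLip : KernelLipschitz P LP)
    (W : ℝ → ℝ → ℝ) (hW : Measurable (Function.uncurry W))
    (hW01 : ∀ α β, W α β ∈ Set.Icc (0 : ℝ) 1) (hWcont : AEContinuousLeft W)
    (ξ : (N : ℕ) → Fin N → Fin N → ℝ) (hξ : ∀ N i j, ξ N i j ∈ Set.Icc (0 : ℝ) 1)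
    (hWconv : OpConvergesTo (fun N => stepGraphon (ξ N)) W)
    (πe : ℝ → ℕ → 𝒳 → 𝒰 → ℝ)
    (hπe : ∀ α ∈ Set.Ioc (0 : ℝ) 1, IsPolicy (πe α))
    (hπcont : ∀ t x u, AEContinuous fun α => πe α t x u)
    (μ : ℕ → ℝ → 𝒳 → ℝ) (hμ : IsMeanFieldOf W P μ0 πe μ)
    (ε p : ℝ) (hε : 0 < ε) (hp : 0 < p) :
    ∃ N' : ℕ, ∀ N > N', ∃ Wset : Finset (Fin N),
      ⌊(1 - p) * (N : ℝ)⌋ ≤ (Wset.card : ℤ) ∧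
      ∀ i ∈ Wset, ∀ πd : ℕ → 𝒳 → 𝒰 → ℝ, IsPolicy πd →
        |JN T r P μ0 (ξ N) (Function.update (gammaN πe N) i πd) i -
          Jmf T r P μ0 (fun s => nbhd W (μ s) (rep N i)) πd| < ε := by
  obtain ⟨R, hR, hrR⟩ := hrLip.exists_abs_le
  have hμ1 := hμ.mem_simplex hW hW01 hP hμ0 hπe
  have hG := fun t => nbhd_mem_subProb hW hW01 (hμ.1 t) (hμ1 t)
  have hπN := fun N i => hπe (rep N i) (rep_mem_Ioc i)
  let S (N : ℕ) := objectiveBound |LP| (Fintype.card 𝒳) (|Lr| + T * (R * |LP|)) T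
    fun t => nbhdError W (ξ N) (μ t)
  have objective_error : ∀ N i πd, IsPolicy πd →
      |JN T r P μ0 (ξ N) (Function.update (gammaN πe N) i πd) i -
        Jmf T r P μ0 (fun s => nbhd W (μ s) (rep N i)) πd| ≤ S N i := fun N i πd hπd =>
    abs_JN_update_sub_Jmf_le (G := fun j t => nbhd W (μ t) (rep N j)) hP (abs_nonneg LP) hPLip.abs
      (abs_nonneg Lr) hrLip.abs hR hrR hμ0 (hξ N) (hπN N) (fun j t => hG t _)
      (fun t j => le_of_eq <| congrArg (l1dist · _) <| congrArg (avgNbhd (ξ N) · j) <|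
        funext fun k => hμ.stateLaw_eq (rep_mem_Ioc k) t)
      i hπd T
  have error_tendsto : Tendsto (fun N : ℕ => (N : ℝ)⁻¹ * ∑ i, S N i) atTop (nhds 0) :=
    tendsto_average_objectiveBound _ _ _ T fun t =>
      tendsto_average_nbhdError (fun N i j => abs_le_one_of_mem_Icc (hξ N i j)) hW
        (fun α β => abs_le_one_of_mem_Icc (hW01 α β)) hWcont hWconv (hμ.1 t)
        (fun x β hβ => abs_le_one_of_mem_Icc (mem_Icc_of_mem_simplex (hμ1 t β hβ) x))
        (hμ.aeContinuous hW hW01 hWcont hP hPLip hμ0 hπe hπcont t)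
  have S_nonneg : ∀ N i, 0 ≤ S N i := fun N i =>
    (abs_nonneg _).trans (objective_error N i _ (hπN N i))
  obtain ⟨N', hN'⟩ := eventually_atTop.1
    (eventually_exists_card_le_forall_lt S_nonneg error_tendsto hε hp)
  refine ⟨N', fun N hN => (hN' N hN.le).imp fun s hs => ⟨hs.1, fun i hi πd hπd => ?_⟩⟩
  exact (objective_error N i πd hπd).trans_lt (hs.2 i hi)

/-- uniform convergence of the N-agent objectives to the mean field
objectives. Under Assumptions (W) and (Lip), for any ε, p > 0 there exists N' such that
for all N > N': |J^N_i(π¹,…,π^{i−1},π̂,π^{i+1},…,π^N) − J^𝛍_{i/N}(π̂)| < ε, uniformly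
over all deviations π̂ ∈ Π and all i in a set 𝒲_N of at least ⌊(1−p)N⌋ agents,
where (π¹,…,π^N) = Γ_N(𝛑). -/
theorem objective_convergence
    {𝒳 𝒰 : Type*} [Fintype 𝒳] [DecidableEq 𝒳] [Nonempty 𝒳] [Fintype 𝒰] [Nonempty 𝒰]
    (T : ℕ) (μ0 : 𝒳 → ℝ) (hμ0 : μ0 ∈ simplex 𝒳)
    (P : 𝒳 → 𝒰 → (𝒳 → ℝ) → 𝒳 → ℝ) (hP : IsKernel P)
    (r : 𝒳 → 𝒰 → (𝒳 → ℝ) → ℝ)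
    (Lr LP LW : ℝ) (hrLip : RewardLipschitz r Lr) (hPLip : KernelLipschitz P LP)
    (W : ℝ → ℝ → ℝ) (hW : IsGraphon W) (hWLip : GraphonLipschitz W LW)
    (ξ : (N : ℕ) → Fin N → Fin N → ℝ) (hξ : ∀ N, IsEdgeWeights (ξ N))
    (hWconv : OpConvergesTo (fun N => stepGraphon (ξ N)) W)
    (πe : ℝ → ℕ → 𝒳 → 𝒰 → ℝ)
    (hπe : ∀ α ∈ Set.Icc (0:ℝ) 1, IsPolicy (πe α))
    (hπemeas : ∀ t x u, Measurable fun α => πe α t x u)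
    (hπeLip : EnsembleLipschitzUpTo πe)
    (μ : ℕ → ℝ → 𝒳 → ℝ) (hμ : IsMeanFieldOf W P μ0 πe μ)
    (ε p : ℝ) (hε : 0 < ε) (hp : 0 < p) :
    ∃ N' : ℕ, ∀ N > N', ∃ Wset : Finset (Fin N),
      ⌊(1 - p) * (N : ℝ)⌋ ≤ (Wset.card : ℤ) ∧
      ∀ i ∈ Wset, ∀ πd : ℕ → 𝒳 → 𝒰 → ℝ, IsPolicy πd →
        |JN T r P μ0 (ξ N) (Function.update (gammaN πe N) i πd) i -
          Jmf T r P μ0 (fun s => nbhd W (μ s) ((((i : ℕ) : ℝ) + 1) / N)) πd| < ε :=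
  objective_convergence_general T μ0 hμ0 P hP r Lr LP hrLip hPLip W hW.1 hW.2.2
    hWLip.aeContinuousLeft ξ (fun N i j => by rcases (hξ N).1 i j with h | h <;> simp [h]) hWconv
    πe (fun α hα => hπe α (Set.Ioc_subset_Icc_self hα)) hπeLip.aeContinuous μ hμ ε p hε hp

end GMFG
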